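/- Let n ≥ 2 and let Ω = ℝⁿ \ Ḡ, where G is a convex domain in ℝⁿ. If u is a bounded harmonic function in Ω, then for every point x ∈ Ω one has |∇u(x)| ≤ (C_n / d_x) · sup_Ω |u|, where C_n = 4(n−1)^{(n−1)/2} ω_{n−1} / (n^{n/2} ω_n). -/

import Mathlib

open MeasureTheory Real Filter Metric
open scoped Real RealInnerProductSpace

noncomputable section

/-- `Eu n` is the Euclidean space `ℝⁿ`. -/
abbrev Eu (n : ℕ) := EuclideanSpace ℝ (Fin n)

/-- `ω_n`: the surface area of the unit sphere `S^{n-1}` in `ℝⁿ`,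
given by the classical formula `2 π^{n/2} / Γ(n/2)`. -/
def sphereArea (n : ℕ) : ℝ := 2 * π ^ ((n : ℝ) / 2) / Real.Gamma ((n : ℝ) / 2)

/-- A function is harmonic on a set: it is twice continuously differentiable
there and its Laplacian (the sum of the pure second partial derivatives in the
coordinate directions) vanishes at every point of the set. -/
def IsHarmonicOn {n : ℕ} (u : Eu n → ℝ) (Ω : Set (Eu n)) : Prop :=
  ContDiffOn ℝ 2 u Ω ∧ ∀ x ∈ Ω,
    ∑ i, fderiv ℝ (fun y => fderiv ℝ u y (EuclideanSpace.single i 1)) x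
      (EuclideanSpace.single i 1) = 0

/-- The constant `C_n = 4 (n-1)^{(n-1)/2} ω_{n-1} / (n^{n/2} ω_n)`. -/
def Cconst (n : ℕ) : ℝ :=
  4 * ((n : ℝ) - 1) ^ (((n : ℝ) - 1) / 2) * sphereArea (n - 1) /
    ((n : ℝ) ^ ((n : ℝ) / 2) * sphereArea n)

theorem exists_rotation {E : Type*} [NormedAddCommGroup E] [InnerProductSpace ℝ E]
    [CompleteSpace E] (v w : E) (h : ‖v‖ = ‖w‖) :
    ∃ R : E ≃ₗᵢ[ℝ] E, R v = w :=
  ⟨_, Submodule.reflection_sub h⟩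

theorem exists_setup (m : ℕ) (e : Eu (m + 1)) (he : ‖e‖ = 1) :
    ∃ ι : Eu m →ₗᵢ[ℝ] Eu (m + 1), (∀ y, ⟪ι y, e⟫ = 0) ∧
      (∀ X, ∃ y, X = ι y + ⟪X, e⟫ • e) ∧
      MeasurePreserving (fun p : ℝ × Eu m => ι p.2 + p.1 • e) := by
  have hfr : Module.finrank ℝ (WithLp 2 (ℝ × Eu m)) = Module.finrank ℝ (Eu (m + 1)) := by
    rw [(WithLp.linearEquiv 2 ℝ (ℝ × Eu m)).finrank_eq]
    simp [add_comm]
  let T0 : WithLp 2 (ℝ × Eu m) ≃ₗᵢ[ℝ] Eu (m + 1) :=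
    (stdOrthonormalBasis ℝ _).equiv (stdOrthonormalBasis ℝ _) (finCongr hfr)
  obtain ⟨R, hR⟩ := exists_rotation (T0 (WithLp.toLp 2 (1, 0))) e (by
    rw [he, LinearIsometryEquiv.norm_map]; simp)
  let T := T0.trans R
  have hT : T (WithLp.toLp 2 (1, 0)) = e := hR
  have hlin : ∀ (s : ℝ) (y : Eu m), T (WithLp.toLp 2 (s, y)) =
      T (WithLp.toLp 2 (0, y)) + s • e := by
    intro s y
    rw [← hT, ← map_smul, ← map_add]
    congr 1
    rw [← WithLp.toLp_smul, ← WithLp.toLp_add]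
    simp
  let ι : Eu m →ₗᵢ[ℝ] Eu (m + 1) :=
    { toFun := fun y => T (WithLp.toLp 2 (0, y))
      map_add' := by
        intro a b
        have : WithLp.toLp 2 ((0 : ℝ), a + b) = WithLp.toLp 2 ((0 : ℝ), a) +
            WithLp.toLp 2 ((0 : ℝ), b) := by
          exact congrArg (WithLp.toLp 2) (by simp : ((0 : ℝ), a + b) = (0, a) + (0, b))
        rw [this, map_add]
      map_smul' := by
        intro c a
        have : WithLp.toLp 2 ((0 : ℝ), c • a) = c • WithLp.toLp 2 ((0 : ℝ), a) := by
          exact congrArg (WithLp.toLp 2) (by simp : ((0 : ℝ), c • a) = c • (0, a))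
        rw [this, map_smul, RingHom.id_apply]
      norm_map' := by
        intro a
        simp }
  have hι : ∀ y, ι y = T (WithLp.toLp 2 (0, y)) := fun _ => rfl
  have hperp : ∀ y, ⟪ι y, e⟫ = 0 := by
    intro y
    rw [hι, ← hT, LinearIsometryEquiv.inner_map_map]
    simp [WithLp.prod_inner_apply]
  refine ⟨ι, hperp, ?_, ?_⟩
  · intro X
    obtain ⟨p, rfl⟩ := T.surjective X
    refine ⟨p.snd, ?_⟩
    have : p = WithLp.toLp 2 (p.fst, p.snd) := rfl
    rw [this, hlin]
    rw [inner_add_left, ← hι, hperp]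
    simp [inner_smul_left, he]
  · have h := T.measurePreserving.comp (WithLp.volume_preserving_toLp ℝ (Eu m))
    convert h using 1
    funext p
    simp only [Function.comp]
    rw [hι]
    exact (hlin p.1 p.2).symm


theorem gamma_int_abs (j : ℕ) (b : ℝ) (hb : 0 < b) :
    ∫ s : ℝ, |s| ^ j * Real.exp (-b * s ^ 2) =
      Real.Gamma (((j : ℝ) + 1) / 2) * b ^ (-((j : ℝ) + 1) / 2) := by
  have h := integral_comp_abs (f := fun s : ℝ => s ^ j * Real.exp (-b * s ^ 2))
  simp only [sq_abs] at h
  rw [h]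
  have h2 := integral_rpow_mul_exp_neg_mul_rpow (p := 2) (q := (j : ℝ)) (b := b) two_pos
    (by have : (0 : ℝ) ≤ j := Nat.cast_nonneg j
        linarith) hb
  simp only [Real.rpow_natCast, Real.rpow_ofNat] at h2
  rw [h2]
  ring

theorem gamma_int_abs_integrable (j : ℕ) (b : ℝ) (hb : 0 < b) :
    Integrable (fun s : ℝ => |s| ^ j * Real.exp (-b * s ^ 2)) := by
  apply Integrable.of_integral_ne_zero
  rw [gamma_int_abs j b hb]
  have := Real.Gamma_pos_of_pos (s := ((j : ℝ) + 1) / 2) (by positivity)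
  positivity

theorem lintegral_scale {m : ℕ} (h : Eu m → ENNReal) (hh : Measurable h) (s : ℝ) (hs : s ≠ 0) :
    ∫⁻ y, h y = ENNReal.ofReal (|s| ^ m) * ∫⁻ z, h (s • z) := by
  have h1 : ∫⁻ z, h (s • z) = ∫⁻ y, h y ∂(Measure.map (fun x => s • x) (volume : Measure (Eu m))) :=
    (lintegral_map hh (measurable_const_smul s)).symm
  rw [h1, Measure.map_addHaar_smul _ hs, lintegral_smul_measure, smul_eq_mul, ← mul_assoc,
    ← ENNReal.ofReal_mul (by positivity)]
  have : |s| ^ m * |(s ^ Module.finrank ℝ (Eu m))⁻¹| = 1 := by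
    rw [finrank_euclideanSpace_fin, abs_inv, abs_pow]
    have : |s| ^ m ≠ 0 := by positivity
    field_simp
  rw [this]; simp

theorem gauss_slice {m : ℕ} (e : Eu (m + 1)) (he : ‖e‖ = 1) (ι : Eu m →ₗᵢ[ℝ] Eu (m + 1))
    (hι : ∀ y, ⟪ι y, e⟫ = 0) (hmp : MeasurePreserving (fun p : ℝ × Eu m => ι p.2 + p.1 • e))
    (G : Eu (m + 1) → ℝ) (hG : Continuous G) (hG0 : ∀ Z, 0 ≤ G Z) (k : ℕ)
    (hGk : ∀ (s : ℝ) Z, G (s • Z) = |s| ^ k * G Z) :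
    ∫⁻ Z, ENNReal.ofReal (G Z * Real.exp (-‖Z‖ ^ 2)) =
      ∫⁻ z, ENNReal.ofReal (Real.Gamma (((m + k : ℕ) + 1 : ℝ) / 2) *
        (G (ι z + e) * (1 + ‖z‖ ^ 2) ^ (-((m + k : ℕ) + 1 : ℝ) / 2))) := by
  have hnorm : ∀ (s : ℝ) (y : Eu m), ‖ι y + s • e‖ ^ 2 = ‖y‖ ^ 2 + s ^ 2 := by
    intro s y
    rw [norm_add_sq_real, inner_smul_right, hι, norm_smul, he, ι.norm_map]
    simp
  have hιc : Continuous ι := ι.continuous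
  rw [← hmp.lintegral_comp (by fun_prop)]
  rw [Measure.volume_eq_prod, lintegral_prod _ (by fun_prop)]
  have step : ∀ᵐ s : ℝ, ∫⁻ y : Eu m, ENNReal.ofReal (G (ι y + s • e) *
      Real.exp (-‖ι y + s • e‖ ^ 2)) = ∫⁻ z : Eu m, ENNReal.ofReal (G (ι z + e) *
        (|s| ^ (m + k) * Real.exp (-(1 + ‖z‖ ^ 2) * s ^ 2))) := by
    have : ∀ᵐ s : ℝ, s ≠ 0 := by
      simp [ae_iff]
    filter_upwards [this] with s hs
    rw [lintegral_scale _ (by fun_prop) s hs, ← lintegral_const_mul _ (by fun_prop)]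
    congr 1
    funext z
    rw [← ENNReal.ofReal_mul (by positivity)]
    congr 1
    rw [hnorm, map_smul, ← smul_add, hGk, norm_smul, mul_pow, Real.norm_eq_abs, sq_abs]
    rw [show -(s ^ 2 * ‖z‖ ^ 2 + s ^ 2) = -(1 + ‖z‖ ^ 2) * s ^ 2 by ring, pow_add]
    ring
  rw [lintegral_congr_ae step, lintegral_lintegral_swap (by
    apply Measurable.aemeasurable
    unfold Function.uncurry
    fun_prop)]
  congr 1
  funext z
  have hb : (0 : ℝ) < 1 + ‖z‖ ^ 2 := by positivity
  rw [← ofReal_integral_eq_lintegral_ofReal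
    ((gamma_int_abs_integrable (m + k) _ hb).const_mul (G (ι z + e)))
    (Eventually.of_forall fun s => by have := hG0 (ι z + e); positivity)]
  rw [integral_const_mul, gamma_int_abs _ _ hb]
  congr 1
  ring


theorem poisson_norm {m : ℕ} :
    ∫ z : Eu m, (1 + ‖z‖ ^ 2) ^ (-((m : ℝ) + 1) / 2) = sphereArea (m + 1) / 2 := by
  have hb : (EuclideanSpace.single (0 : Fin (m + 1)) (1 : ℝ)) = EuclideanSpace.single 0 1 := rfl
  obtain ⟨ι, h1, -, h3⟩ := exists_setup m (EuclideanSpace.single 0 1) (by simp)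
  have hg := gauss_slice _ (by simp) ι h1 h3 (fun _ => 1) continuous_const
    (fun _ => zero_le_one) 0 (by simp)
  have hIntegr := GaussianFourier.integral_rexp_neg_mul_sq_norm (V := Eu (m + 1)) one_pos
  simp only [neg_mul, one_mul, div_one, finrank_euclideanSpace_fin] at hIntegr
  have hG : 0 < Real.Gamma (((m : ℝ) + 1) / 2) := Real.Gamma_pos_of_pos (by positivity)
  simp only [one_mul, add_zero] at hg
  have e1 := integral_eq_lintegral_of_nonneg_ae (μ := (volume : Measure (Eu (m + 1))))
    (f := fun Z => Real.exp (-‖Z‖ ^ 2))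
    (Eventually.of_forall fun _ => (Real.exp_pos _).le) (by fun_prop)
  have hcont : Continuous fun z : Eu m => Real.Gamma (((m : ℝ) + 1) / 2) *
      (1 + ‖z‖ ^ 2) ^ (-((m : ℝ) + 1) / 2) := by
    refine continuous_const.mul (Continuous.rpow_const (by fun_prop) fun z => Or.inl ?_)
    positivity
  have e2 := integral_eq_lintegral_of_nonneg_ae (μ := (volume : Measure (Eu m)))
    (f := fun z => Real.Gamma (((m : ℝ) + 1) / 2) * (1 + ‖z‖ ^ 2) ^ (-((m : ℝ) + 1) / 2))
    (Eventually.of_forall fun _ => by positivity) hcont.aestronglyMeasurable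
  rw [hg, ← e2, hIntegr, integral_const_mul] at e1
  unfold sphereArea
  push_cast at e1 ⊢
  rw [mul_div_assoc, mul_comm, mul_div_assoc, div_self two_ne_zero, mul_one, e1]
  field_simp

/-- the quadratic form occurring in the gradient of the Poisson kernel -/
def qform {m : ℕ} (e l Z : Eu (m + 1)) : ℝ :=
  ⟪l, e⟫ * ‖Z‖ ^ 2 - (m + 1) * ⟪Z, e⟫ * ⟪Z, l⟫

/-- Gaussian integral of the quadratic form -/
def Jint {m : ℕ} (a : Eu (m + 1)) : ENNReal :=
  ∫⁻ Z, ENNReal.ofReal (|qform a a Z| * Real.exp (-‖Z‖ ^ 2))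

theorem qform_cont {m : ℕ} (e l : Eu (m + 1)) : Continuous (qform e l) := by
  unfold qform; fun_prop

theorem qform_smul {m : ℕ} (e l : Eu (m + 1)) (s : ℝ) (Z : Eu (m + 1)) :
    |qform e l (s • Z)| = |s| ^ 2 * |qform e l Z| := by
  unfold qform
  rw [sq_abs, ← abs_of_nonneg (sq_nonneg s), ← abs_mul, norm_smul, inner_smul_left,
    inner_smul_left, mul_pow, Real.norm_eq_abs, sq_abs]
  simp only [conj_trivial]
  congr 1
  ring

theorem Jint_congr {m : ℕ} (a b : Eu (m + 1)) (h : ‖a‖ = ‖b‖) : Jint a = Jint b := by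
  obtain ⟨R, hR⟩ := exists_rotation b a h.symm
  unfold Jint
  have hc := qform_cont a a
  rw [← R.measurePreserving.lintegral_comp (by fun_prop)]
  congr 1
  funext Z
  unfold qform
  rw [← hR]
  simp only [LinearIsometryEquiv.inner_map_map, LinearIsometryEquiv.norm_map]

theorem Jint_smul {m : ℕ} (a : Eu (m + 1)) (c : ℝ) :
    Jint (c • a) = ENNReal.ofReal (c ^ 2) * Jint a := by
  unfold Jint
  have hc := qform_cont a a
  rw [← lintegral_const_mul _ (by fun_prop)]
  congr 1
  funext Z
  rw [← ENNReal.ofReal_mul (by positivity), ← mul_assoc]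
  congr 2
  unfold qform
  nth_rewrite 1 [← abs_of_nonneg (sq_nonneg c)]
  rw [← abs_mul]
  simp only [inner_smul_left, inner_smul_right, conj_trivial]
  congr 1
  ring

theorem Jint_eq {m : ℕ} (e a : Eu (m + 1)) (he : ‖e‖ = 1) :
    Jint a = ENNReal.ofReal (‖a‖ ^ 2) * Jint e := by
  rw [← Jint_smul]
  apply Jint_congr
  rw [norm_smul, he]; simp

theorem Jint_le {m : ℕ} (e l : Eu (m + 1)) (he : ‖e‖ = 1) (hl : ‖l‖ = 1) :
    ∫⁻ Z, ENNReal.ofReal (|qform e l Z| * Real.exp (-‖Z‖ ^ 2)) ≤ Jint e := by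
  have hc := qform_cont (e + l) (e + l)
  have hc' := qform_cont (e - l) (e - l)
  calc _ ≤ ∫⁻ Z, (ENNReal.ofReal (1 / 4) * ENNReal.ofReal (|qform (e + l) (e + l) Z| * Real.exp (-‖Z‖ ^ 2))
        + ENNReal.ofReal (1 / 4) * ENNReal.ofReal (|qform (e - l) (e - l) Z| * Real.exp (-‖Z‖ ^ 2))) := by
        apply lintegral_mono
        intro Z
        beta_reduce
        rw [← ENNReal.ofReal_mul (by positivity), ← ENNReal.ofReal_mul (by positivity),
          ← ENNReal.ofReal_add (by positivity) (by positivity)]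
        apply ENNReal.ofReal_le_ofReal
        have key : qform e l Z = 1 / 4 * qform (e + l) (e + l) Z - 1 / 4 * qform (e - l) (e - l) Z := by
          unfold qform
          simp only [inner_add_left, inner_add_right, inner_sub_left, inner_sub_right]
          rw [real_inner_comm e l]
          ring
        rw [← mul_assoc, ← mul_assoc, ← add_mul]
        apply mul_le_mul_of_nonneg_right _ (Real.exp_pos _).le
        rw [key]
        refine (abs_sub _ _).trans ?_
        rw [abs_mul, abs_mul, abs_of_nonneg (by norm_num : (0 : ℝ) ≤ 1 / 4)]
    _ = ENNReal.ofReal (1 / 4) * Jint (e + l) + ENNReal.ofReal (1 / 4) * Jint (e - l) := by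
        rw [lintegral_add_left (by fun_prop), lintegral_const_mul _ (by fun_prop),
          lintegral_const_mul _ (by fun_prop)]
        rfl
    _ = Jint e := by
        rw [Jint_eq e (e + l) he, Jint_eq e (e - l) he, ← mul_assoc, ← mul_assoc, ← add_mul,
          ← ENNReal.ofReal_mul (by positivity), ← ENNReal.ofReal_mul (by positivity),
          ← ENNReal.ofReal_add (by positivity) (by positivity)]
        have : 1 / 4 * ‖e + l‖ ^ 2 + 1 / 4 * ‖e - l‖ ^ 2 = 1 := by
          rw [norm_add_sq_real, norm_sub_sq_real, he, hl]; ring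
        rw [this]; simp



theorem radial_hasDeriv {m : ℕ} (hm : 1 ≤ m) (r : ℝ) :
    HasDerivAt (fun r : ℝ => r ^ m * (1 + r ^ 2) ^ (-((m : ℝ) + 1) / 2))
      (r ^ (m - 1) * ((m - r ^ 2) * (1 + r ^ 2) ^ (-((m : ℝ) + 3) / 2))) r := by
  have hpos : 0 < 1 + r ^ 2 := by positivity
  have h1 : HasDerivAt (fun r : ℝ => 1 + r ^ 2) (2 * r) r := by
    simpa using (hasDerivAt_pow 2 r).const_add 1
  have h2 := (hasDerivAt_pow m r).mul (h1.rpow_const (p := -((m : ℝ) + 1) / 2) (Or.inl hpos.ne'))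
  refine h2.congr_deriv ?_
  have e1 : (1 + r ^ 2) ^ (-((m : ℝ) + 1) / 2) =
      (1 + r ^ 2) ^ (-((m : ℝ) + 3) / 2) * (1 + r ^ 2) := by
    rw [← Real.rpow_add_one hpos.ne']; congr 1; ring
  have e2 : -((m : ℝ) + 1) / 2 - 1 = -((m : ℝ) + 3) / 2 := by ring
  have e3 : r ^ m = r ^ (m - 1) * r := by
    rw [← pow_succ]; congr 1; omega
  rw [e2, e1, e3]
  ring

theorem radial_tendsto {m : ℕ} :
    Tendsto (fun r : ℝ => r ^ m * (1 + r ^ 2) ^ (-((m : ℝ) + 1) / 2)) atTop (nhds 0) := by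
  refine squeeze_zero' (g := fun r : ℝ => r⁻¹) ?_ ?_ tendsto_inv_atTop_zero
  · filter_upwards [eventually_gt_atTop 0] with r hr
    positivity
  · filter_upwards [eventually_gt_atTop 0] with r hr
    have h1 : (1 + r ^ 2) ^ (-((m : ℝ) + 1) / 2) ≤ (r ^ 2) ^ (-((m : ℝ) + 1) / 2) := by
      apply Real.rpow_le_rpow_of_nonpos (by positivity) (by linarith)
      have : (0 : ℝ) ≤ m := Nat.cast_nonneg m
      linarith
    have h2 : (r ^ 2) ^ (-((m : ℝ) + 1) / 2) = (r ^ m)⁻¹ * r⁻¹ := by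
      rw [← Real.rpow_natCast r 2, ← Real.rpow_mul hr.le]
      push_cast
      rw [show 2 * (-((m : ℝ) + 1) / 2) = -((m + 1 : ℕ) : ℝ) by push_cast; ring,
        Real.rpow_neg hr.le, Real.rpow_natCast, pow_succ, mul_inv]
    calc _ ≤ r ^ m * ((r ^ m)⁻¹ * r⁻¹) := by
          rw [← h2]; gcongr
      _ = r⁻¹ := by
          have : r ^ m ≠ 0 := by positivity
          field_simp

theorem radial_integral {m : ℕ} (hm : 1 ≤ m) :
    ∫ r in Set.Ioi (0 : ℝ), r ^ (m - 1) * (|r ^ 2 - m| * (1 + r ^ 2) ^ (-((m : ℝ) + 3) / 2)) =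
      2 * ((m : ℝ) ^ ((m : ℝ) / 2) / ((m : ℝ) + 1) ^ (((m : ℝ) + 1) / 2)) := by
  set g : ℝ → ℝ := fun r : ℝ => r ^ m * (1 + r ^ 2) ^ (-((m : ℝ) + 1) / 2) with hg
  set g' : ℝ → ℝ := fun r : ℝ => r ^ (m - 1) * ((m - r ^ 2) * (1 + r ^ 2) ^ (-((m : ℝ) + 3) / 2))
    with hg'
  set f : ℝ → ℝ := fun r : ℝ => r ^ (m - 1) * (|r ^ 2 - m| * (1 + r ^ 2) ^ (-((m : ℝ) + 3) / 2))
    with hf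
  have hd : ∀ r, HasDerivAt g (g' r) r := fun r => radial_hasDeriv hm r
  have hm0 : (0 : ℝ) < m := by exact_mod_cast hm
  set a := √(m : ℝ) with ha
  have ha0 : 0 < a := Real.sqrt_pos.mpr hm0
  have ha2 : a ^ 2 = m := Real.sq_sqrt hm0.le
  have hgc : Continuous g' := by
    refine Continuous.mul (by fun_prop) (Continuous.mul (by fun_prop)
      (Continuous.rpow_const (by fun_prop) fun z => Or.inl ?_))
    positivity
  have hle : ∀ r ∈ Set.Ioi a, g' r ≤ 0 := by
    intro r hr
    have hr' : a < r := hr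
    have hr0 : 0 < r := ha0.trans hr'
    have : (m : ℝ) - r ^ 2 ≤ 0 := by
      rw [← ha2]; nlinarith
    have h2 : 0 ≤ (1 + r ^ 2) ^ (-((m : ℝ) + 3) / 2) := by positivity
    exact mul_nonpos_of_nonneg_of_nonpos (by positivity) (mul_nonpos_of_nonpos_of_nonneg this h2)
  have I1 : ∫ r in Set.Ioi a, g' r = 0 - g a :=
    integral_Ioi_of_hasDerivAt_of_nonpos' (fun r _ => hd r) hle radial_tendsto
  have Int1 : IntegrableOn g' (Set.Ioi a) :=
    integrableOn_Ioi_deriv_of_nonpos' (fun r _ => hd r) hle radial_tendsto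
  have I2 : ∫ r in (0 : ℝ)..a, g' r = g a - g 0 :=
    intervalIntegral.integral_eq_sub_of_hasDerivAt (fun r _ => hd r) (hgc.intervalIntegrable _ _)
  have hg0 : g 0 = 0 := by
    simp only [hg]; rw [zero_pow (by omega)]; simp
  have f1 : ∀ r ∈ Set.Ioi a, f r = - g' r := by
    intro r hr
    have hr' : a < r := hr
    have : 0 ≤ r ^ 2 - (m : ℝ) := by rw [← ha2]; nlinarith
    simp only [hf, hg']
    rw [abs_of_nonneg this]; ring
  have f2 : ∀ r ∈ Set.Ioc 0 a, f r = g' r := by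
    intro r hr
    have : r ^ 2 - (m : ℝ) ≤ 0 := by rw [← ha2]; nlinarith [hr.1, hr.2]
    simp only [hf, hg']
    rw [abs_of_nonpos this]; ring
  have hu : Set.Ioi (0 : ℝ) = Set.Ioc 0 a ∪ Set.Ioi a := (Set.Ioc_union_Ioi_eq_Ioi ha0.le).symm
  rw [hu, setIntegral_union (Set.Ioc_disjoint_Ioi le_rfl) measurableSet_Ioi]
  · rw [setIntegral_congr_fun measurableSet_Ioc f2, setIntegral_congr_fun measurableSet_Ioi f1,
      integral_neg, I1, ← intervalIntegral.integral_of_le ha0.le, I2, hg0]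
    have : g a = (m : ℝ) ^ ((m : ℝ) / 2) / ((m : ℝ) + 1) ^ (((m : ℝ) + 1) / 2) := by
      simp only [hg]
      rw [ha2, neg_div, Real.rpow_neg (by positivity), add_comm (1 : ℝ), div_eq_mul_inv (_ ^ _)]
      congr 1
      rw [ha, Real.sqrt_eq_rpow, ← Real.rpow_natCast, ← Real.rpow_mul hm0.le]
      congr 1; ring
    rw [this]; ring
  · exact ((hgc.integrableOn_Ioc).congr_fun (fun r hr => (f2 r hr).symm) measurableSet_Ioc)
  · exact (Int1.neg.congr_fun (fun r hr => (f1 r hr).symm) measurableSet_Ioi)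

theorem ball_area {m : ℕ} (hm : 1 ≤ m) :
    (m : ℝ) * (volume : Measure (Eu m)).real (ball 0 1) = sphereArea m := by
  have : Nonempty (Fin m) := ⟨⟨0, hm⟩⟩
  have hm0 : (0 : ℝ) < m := by exact_mod_cast hm
  have hG := Real.Gamma_pos_of_pos (s := (m : ℝ) / 2) (by positivity)
  rw [Measure.real, EuclideanSpace.volume_ball]
  simp only [ENNReal.ofReal_one, one_pow, one_mul, Fintype.card_fin]
  rw [Real.Gamma_add_one (by positivity), ENNReal.toReal_ofReal (by positivity)]
  unfold sphereArea
  rw [Real.sqrt_eq_rpow, ← Real.rpow_natCast, ← Real.rpow_mul Real.pi_pos.le,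
    show 1 / 2 * (m : ℝ) = m / 2 by ring]
  field_simp

theorem K_normal {m : ℕ} (hm : 1 ≤ m) :
    ∫ z : Eu m, |‖z‖ ^ 2 - m| * (1 + ‖z‖ ^ 2) ^ (-((m : ℝ) + 3) / 2) =
      sphereArea m * (2 * ((m : ℝ) ^ ((m : ℝ) / 2) / ((m : ℝ) + 1) ^ (((m : ℝ) + 1) / 2))) := by
  have : Nonempty (Fin m) := ⟨⟨0, hm⟩⟩
  have h := integral_fun_norm_addHaar (volume : Measure (Eu m))
    (fun r => |r ^ 2 - m| * (1 + r ^ 2) ^ (-((m : ℝ) + 3) / 2))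
  rw [h, finrank_euclideanSpace_fin]
  simp only [smul_eq_mul, nsmul_eq_mul]
  rw [radial_integral hm, ← mul_assoc, ball_area hm]

theorem sphereArea_pos {m : ℕ} (hm : 1 ≤ m) : 0 < sphereArea m := by
  have hm0 : (0 : ℝ) < m := by exact_mod_cast hm
  have hG := Real.Gamma_pos_of_pos (s := (m : ℝ) / 2) (by positivity)
  unfold sphereArea
  positivity

theorem K_le {m : ℕ} (hm : 1 ≤ m) (e l : Eu (m + 1)) (he : ‖e‖ = 1) (hl : ‖l‖ = 1)
    (ι : Eu m →ₗᵢ[ℝ] Eu (m + 1))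
    (hι : ∀ y, ⟪ι y, e⟫ = 0) (hmp : MeasurePreserving (fun p : ℝ × Eu m => ι p.2 + p.1 • e)) :
    ∫ z : Eu m, |qform e l (ι z + e)| * (1 + ‖z‖ ^ 2) ^ (-((m : ℝ) + 3) / 2) ≤
      sphereArea m * (2 * ((m : ℝ) ^ ((m : ℝ) / 2) / ((m : ℝ) + 1) ^ (((m : ℝ) + 1) / 2))) := by
  have hm0 : (0 : ℝ) < m := by exact_mod_cast hm
  have hιc : Continuous ι := ι.continuous
  have main : ∀ a, ∫⁻ z : Eu m, ENNReal.ofReal (|qform e a (ι z + e)| *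
      (1 + ‖z‖ ^ 2) ^ (-((m : ℝ) + 3) / 2)) = ENNReal.ofReal (Real.Gamma (((m : ℝ) + 3) / 2))⁻¹ *
        ∫⁻ Z, ENNReal.ofReal (|qform e a Z| * Real.exp (-‖Z‖ ^ 2)) := by
    intro a
    have hc := qform_cont e a
    have h := gauss_slice e he ι hι hmp (fun Z => |qform e a Z|) (by fun_prop)
      (fun _ => abs_nonneg _) 2 (fun s Z => qform_smul e a s Z)
    have hG := Real.Gamma_pos_of_pos (s := ((m : ℝ) + 3) / 2) (by positivity)
    have hh : ((m + 2 : ℕ) : ℝ) + 1 = m + 3 := by push_cast; ring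
    rw [hh] at h
    rw [h, ← lintegral_const_mul]
    · congr 1
      funext z
      rw [← ENNReal.ofReal_mul (by positivity), ← mul_assoc, inv_mul_cancel₀ hG.ne', one_mul]
    · have : Measurable fun z : Eu m => (1 + ‖z‖ ^ 2) ^ (-((m : ℝ) + 3) / 2) := by fun_prop
      fun_prop
  have hle : ∫⁻ z : Eu m, ENNReal.ofReal (|qform e l (ι z + e)| *
      (1 + ‖z‖ ^ 2) ^ (-((m : ℝ) + 3) / 2)) ≤ ∫⁻ z : Eu m, ENNReal.ofReal (|‖z‖ ^ 2 - m| *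
      (1 + ‖z‖ ^ 2) ^ (-((m : ℝ) + 3) / 2)) := by
    have : ∀ z : Eu m, qform e e (ι z + e) = ‖z‖ ^ 2 - m := by
      intro z
      unfold qform
      rw [norm_add_sq_real, inner_add_left, hι, ι.norm_map, real_inner_self_eq_norm_sq, he]
      ring
    simp only [← this]
    rw [main l, main e]
    exact mul_le_mul_right (Jint_le e l he hl) _
  have hSpos := sphereArea_pos hm
  have hIntegr : Integrable fun z : Eu m => |‖z‖ ^ 2 - m| * (1 + ‖z‖ ^ 2) ^ (-((m : ℝ) + 3) / 2) := by
    apply Integrable.of_integral_ne_zero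
    rw [K_normal hm]
    positivity
  have hc := qform_cont e l
  have hcr : Measurable fun z : Eu m => (1 + ‖z‖ ^ 2) ^ (-((m : ℝ) + 3) / 2) := by fun_prop
  rw [← K_normal hm, integral_eq_lintegral_of_nonneg_ae (Eventually.of_forall fun _ => by positivity)
    (Measurable.aestronglyMeasurable (by fun_prop)),
    integral_eq_lintegral_of_nonneg_ae (Eventually.of_forall fun _ => by positivity)
    hIntegr.1]
  apply ENNReal.toReal_mono _ hle
  have := hIntegr.lintegral_lt_top
  exact this.ne


theorem second_deriv_nonpos (f f' : ℝ → ℝ) (c : ℝ) (hmax : IsLocalMax f 0)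
    (h1 : ∀ᶠ s in nhds (0 : ℝ), HasDerivAt f (f' s) s) (h2 : HasDerivAt f' c 0) : c ≤ 0 := by
  by_contra hc
  push Not at hc
  have hd : deriv f =ᶠ[nhds 0] f' := h1.mono fun s hs => hs.deriv
  have h0 : deriv f 0 = 0 := hmax.deriv_eq_zero
  have hdd : deriv (deriv f) 0 = c := by
    rw [hd.deriv_eq, h2.deriv]
  have hmin := isLocalMin_of_deriv_deriv_pos (by rw [hdd]; exact hc) h0
    h1.self_of_nhds.continuousAt
  have hconst : f =ᶠ[nhds 0] fun _ => f 0 := by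
    filter_upwards [hmax, hmin] with s hs hs'
    exact le_antisymm hs hs'
  have h3 : deriv f =ᶠ[nhds 0] deriv (fun _ => f 0) := hconst.deriv
  have : deriv (deriv f) 0 = 0 := by
    rw [h3.deriv_eq]; simp
  linarith

/-- `φ` has pure second derivatives along the coordinate lines at `X`, summing to `L`. -/
def HasLap {n : ℕ} (φ : Eu n → ℝ) (X : Eu n) (L : ℝ) : Prop :=
  ∃ c : Fin n → ℝ, ∑ i, c i = L ∧ ∀ i, ∃ f' : ℝ → ℝ,
    (∀ᶠ s in nhds (0 : ℝ), HasDerivAt (fun s : ℝ => φ (X + s • EuclideanSpace.single i 1)) (f' s) s) ∧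
      HasDerivAt f' (c i) 0

theorem HasLap.sub {n : ℕ} {φ ψ : Eu n → ℝ} {X : Eu n} {L L' : ℝ} (h : HasLap φ X L)
    (h' : HasLap ψ X L') : HasLap (fun Y => φ Y - ψ Y) X (L - L') := by
  obtain ⟨c, hc, h⟩ := h
  obtain ⟨c', hc', h'⟩ := h'
  refine ⟨fun i => c i - c' i, by rw [Finset.sum_sub_distrib, hc, hc'], fun i => ?_⟩
  obtain ⟨f, hf, hf2⟩ := h i
  obtain ⟨g, hg, hg2⟩ := h' i
  refine ⟨fun s => f s - g s, ?_, hf2.sub hg2⟩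
  filter_upwards [hf, hg] with s a b
  exact a.sub b

theorem HasLap.nonpos {n : ℕ} {φ : Eu n → ℝ} {X : Eu n} {L : ℝ} (h : HasLap φ X L)
    (hmax : IsLocalMax φ X) : L ≤ 0 := by
  obtain ⟨c, hc, h⟩ := h
  rw [← hc]
  apply Finset.sum_nonpos
  intro i _
  obtain ⟨f', h1, h2⟩ := h i
  refine second_deriv_nonpos _ f' (c i) ?_ h1 h2
  have hcont : Tendsto (fun s : ℝ => X + s • EuclideanSpace.single i (1 : ℝ)) (nhds 0) (nhds X) := by
    have : Continuous (fun s : ℝ => X + s • EuclideanSpace.single i (1 : ℝ)) := by fun_prop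
    simpa using this.tendsto 0
  have := hcont.eventually hmax
  simpa [IsLocalMax, IsMaxFilter] using this

theorem quad_deriv (α β γ s : ℝ) : HasDerivAt (fun s : ℝ => α + β * s + γ * s ^ 2)
    (β + 2 * γ * s) s := by
  have h := (((hasDerivAt_id s).const_mul β).const_add α).add ((hasDerivAt_pow 2 s).const_mul γ)
  refine h.congr_deriv ?_
  simp; ring

theorem lin_deriv (β γ s : ℝ) : HasDerivAt (fun s : ℝ => β + 2 * γ * s) (2 * γ) s := by
  have h := (((hasDerivAt_id s).const_mul (2 * γ)).const_add β)
  refine h.congr_deriv ?_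
  simp

theorem barrier_lap {n : ℕ} (e : Eu n) (he : ‖e‖ = 1) (κ ε T : ℝ) (X : Eu n) :
    HasLap (fun Y => κ * ⟪Y, e⟫ + ε * (‖Y‖ ^ 2 + (n + 1) * (T ^ 2 - ⟪Y, e⟫ ^ 2))) X (-2 * ε) := by
  refine ⟨fun i => 2 * (ε * (1 - (n + 1) * e i ^ 2)), ?_, fun i => ?_⟩
  · have : ∑ i, e i ^ 2 = 1 := by
      rw [← EuclideanSpace.real_norm_sq_eq, he]; norm_num
    rw [← Finset.mul_sum, ← Finset.mul_sum, Finset.sum_sub_distrib, ← Finset.mul_sum, this]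
    simp
    try ring
  · refine ⟨fun s => (κ * e i + ε * (2 * X i - (n + 1) * (2 * ⟪X, e⟫ * e i))) +
        2 * (ε * (1 - (n + 1) * e i ^ 2)) * s, Eventually.of_forall fun s => ?_, lin_deriv _ _ _⟩
    have h := quad_deriv (κ * ⟪X, e⟫ + ε * (‖X‖ ^ 2 + (n + 1) * (T ^ 2 - ⟪X, e⟫ ^ 2)))
      (κ * e i + ε * (2 * X i - (n + 1) * (2 * ⟪X, e⟫ * e i))) (ε * (1 - (n + 1) * e i ^ 2)) s
    convert h using 1
    funext s
    beta_reduce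
    rw [norm_add_sq_real, inner_add_left, inner_smul_left, inner_smul_right, norm_smul]
    simp only [EuclideanSpace.inner_single_left, EuclideanSpace.inner_single_right]
    simp
    ring

theorem halfspace_max {n : ℕ} (e : Eu n) (he : ‖e‖ = 1) (w : Eu n → ℝ)
    (hc : ContinuousOn w {X | 0 ≤ ⟪X, e⟫}) (S : ℝ) (hS : 0 ≤ S) (hb : ∀ X, 0 ≤ ⟪X, e⟫ → w X ≤ S)
    (h0 : ∀ X, ⟪X, e⟫ = 0 → w X ≤ 0) (hL : ∀ X, 0 < ⟪X, e⟫ → HasLap w X 0)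
    (X0 : Eu n) (hX0 : 0 < ⟪X0, e⟫) : w X0 ≤ 0 := by
  have key : ∀ T, ⟪X0, e⟫ < T → ∀ ε, 0 < ε →
      w X0 ≤ S / T * ⟪X0, e⟫ + ε * (‖X0‖ ^ 2 + (n + 1) * (T ^ 2 - ⟪X0, e⟫ ^ 2)) := by
    intro T hT ε hε
    have hT0 : 0 < T := hX0.trans hT
    by_contra hcon
    push Not at hcon
    set b : Eu n → ℝ := fun Y => S / T * ⟪Y, e⟫ + ε * (‖Y‖ ^ 2 + (n + 1) * (T ^ 2 - ⟪Y, e⟫ ^ 2))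
      with hbdef
    set R := ‖X0‖ + S / ε + 1 with hR
    have hR1 : 1 ≤ R := by
      have : 0 ≤ ‖X0‖ + S / ε := by positivity
      linarith
    have hR2 : S ≤ ε * R ^ 2 := by
      have h1 : S / ε ≤ R := by rw [hR]; linarith [norm_nonneg X0]
      have h2 : R ≤ R ^ 2 := by nlinarith
      calc S = ε * (S / ε) := by field_simp
        _ ≤ ε * R ^ 2 := by gcongr; linarith
    have hR3 : ‖X0‖ < R := by
      have : 0 ≤ S / ε := by positivity
      rw [hR]; linarith
    have hbc : Continuous b := by rw [hbdef]; fun_prop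
    have hte : Continuous fun Y : Eu n => ⟪Y, e⟫ := by fun_prop
    set K : Set (Eu n) := closedBall 0 R ∩ {X | 0 ≤ ⟪X, e⟫ ∧ ⟪X, e⟫ ≤ T} with hK
    have hKc : IsCompact K := by
      apply (isCompact_closedBall _ _).inter_right
      exact (isClosed_le continuous_const hte).inter (isClosed_le hte continuous_const)
    have hX0K : X0 ∈ K := ⟨by simpa using hR3.le, hX0.le, hT.le⟩
    obtain ⟨X1, hX1, hmax⟩ := hKc.exists_isMaxOn ⟨X0, hX0K⟩
      (f := fun Y => w Y - b Y) ((hc.mono fun Y hY => hY.2.1).sub hbc.continuousOn)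
    have hpos : 0 < w X1 - b X1 := by
      have h1 := hmax hX0K
      simp only [Set.mem_ofPred_eq] at h1
      have : b X0 < w X0 := hcon
      linarith
    obtain ⟨hX1R, hX1a, hX1b⟩ := hX1
    have hX1R' : ‖X1‖ ≤ R := by simpa using hX1R
    have hnn : 0 ≤ (n + 1 : ℝ) * (T ^ 2 - ⟪X1, e⟫ ^ 2) := by
      have : ⟪X1, e⟫ ^ 2 ≤ T ^ 2 := by gcongr
      exact mul_nonneg (by positivity) (by linarith)
    have hST : 0 ≤ S / T * ⟪X1, e⟫ := by positivity
    have hbX1 : b X1 = S / T * ⟪X1, e⟫ + ε * (‖X1‖ ^ 2 + (n + 1) * (T ^ 2 - ⟪X1, e⟫ ^ 2)) := rfl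
    have hεn : 0 ≤ ε * ((n + 1 : ℝ) * (T ^ 2 - ⟪X1, e⟫ ^ 2)) := by positivity
    have hεX : 0 ≤ ε * ‖X1‖ ^ 2 := by positivity
    rw [mul_add] at hbX1
    have c1 : 0 < ⟪X1, e⟫ := by
      rcases hX1a.lt_or_eq with h | h
      · exact h
      · have := h0 X1 h.symm
        linarith
    have c2 : ⟪X1, e⟫ < T := by
      rcases hX1b.lt_or_eq with h | h
      · exact h
      · have h1 := hb X1 hX1a
        have h2 : S / T * ⟪X1, e⟫ = S := by rw [h]; field_simp
        linarith
    have c3 : ‖X1‖ < R := by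
      rcases hX1R'.lt_or_eq with h | h
      · exact h
      · have h1 := hb X1 hX1a
        rw [← h] at hR2
        linarith
    have hnhds : K ∈ nhds X1 := by
      apply Filter.inter_mem
      · exact Metric.closedBall_mem_nhds_of_mem (by simpa using c3)
      · filter_upwards [(isOpen_lt continuous_const hte).mem_nhds c1,
          (isOpen_lt hte continuous_const).mem_nhds c2] with Y h1 h2
        exact ⟨le_of_lt h1, le_of_lt h2⟩
    have hloc : IsLocalMax (fun Y => w Y - b Y) X1 := hmax.isLocalMax hnhds
    have := ((hL X1 c1).sub (barrier_lap e he (S / T) ε T X1)).nonpos hloc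
    linarith
  have key2 : ∀ T, ⟪X0, e⟫ < T → w X0 ≤ S / T * ⟪X0, e⟫ := by
    intro T hT
    have hlim : Tendsto (fun ε : ℝ => S / T * ⟪X0, e⟫ +
        ε * (‖X0‖ ^ 2 + (n + 1) * (T ^ 2 - ⟪X0, e⟫ ^ 2))) (nhdsWithin 0 (Set.Ioi 0))
        (nhds (S / T * ⟪X0, e⟫)) := by
      have : Continuous (fun ε : ℝ => S / T * ⟪X0, e⟫ +
        ε * (‖X0‖ ^ 2 + (n + 1) * (T ^ 2 - ⟪X0, e⟫ ^ 2))) := by fun_prop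
      simpa using (this.tendsto 0).mono_left nhdsWithin_le_nhds
    refine ge_of_tendsto hlim ?_
    filter_upwards [self_mem_nhdsWithin] with ε hε
    exact key T hT ε hε
  have hlim : Tendsto (fun T : ℝ => S / T * ⟪X0, e⟫) atTop (nhds 0) := by
    simpa using (tendsto_id.const_div_atTop S).mul_const (⟪X0, e⟫ : ℝ)
  refine ge_of_tendsto hlim ?_
  filter_upwards [eventually_gt_atTop (⟪X0, e⟫ : ℝ)] with T hT
  exact key2 T hT

theorem c2_lap {n : ℕ} (u : Eu n → ℝ) (O : Set (Eu n)) (hO : IsOpen O) (hu : IsHarmonicOn u O)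
    (X : Eu n) (hX : X ∈ O) : HasLap u X 0 := by
  obtain ⟨h2, hl⟩ := hu
  refine ⟨_, hl X hX, fun i => ?_⟩
  set b := EuclideanSpace.single i (1 : ℝ) with hb
  have hline : ∀ s : ℝ, HasDerivAt (fun s : ℝ => X + s • b) b s := by
    intro s
    simpa using ((hasDerivAt_id s).smul_const b).const_add X
  refine ⟨fun s => fderiv ℝ u (X + s • b) b, ?_, ?_⟩
  · have hcont : Continuous (fun s : ℝ => X + s • b) := by fun_prop
    have : ∀ᶠ s in nhds (0 : ℝ), X + s • b ∈ O := by
      apply hcont.continuousAt.eventually_mem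
      apply hO.mem_nhds; simpa using hX
    filter_upwards [this] with s hs
    have hd : DifferentiableAt ℝ u (X + s • b) :=
      (h2.contDiffAt (hO.mem_nhds hs)).differentiableAt (by norm_num)
    exact hd.hasFDerivAt.comp_hasDerivAt s (hline s)
  · have hd : DifferentiableAt ℝ (fun y => fderiv ℝ u y b) X := by
      have h3 := ((h2.contDiffAt (hO.mem_nhds hX)).fderiv_right (m := 1) (by norm_num))
      exact (h3.differentiableAt (by norm_num)).clm_apply (differentiableAt_const b)
    have hd' : HasFDerivAt (fun y => fderiv ℝ u y b) (fderiv ℝ (fun y => fderiv ℝ u y b) X)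
        (X + (0 : ℝ) • b) := by
      simpa using hd.hasFDerivAt
    exact hd'.comp_hasDerivAt 0 (hline 0)


/-- the (unnormalised) Poisson kernel of the half space with normal `e` -/
def Pk {m : ℕ} (e Z : Eu (m + 1)) : ℝ := ⟪Z, e⟫ * (‖Z‖ ^ 2) ^ (-((m : ℝ) + 1) / 2)

/-- its first derivative in direction `w` -/
def D1 {m : ℕ} (e w Z : Eu (m + 1)) : ℝ :=
  ⟪w, e⟫ * (‖Z‖ ^ 2) ^ (-((m : ℝ) + 1) / 2) -
    (m + 1) * (⟪Z, e⟫ * ⟪Z, w⟫ * (‖Z‖ ^ 2) ^ (-((m : ℝ) + 1) / 2 - 1))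

/-- its second derivative in direction `w` -/
def D2 {m : ℕ} (e w Z : Eu (m + 1)) : ℝ :=
  -2 * (m + 1) * (⟪w, e⟫ * ⟪Z, w⟫ * (‖Z‖ ^ 2) ^ (-((m : ℝ) + 1) / 2 - 1))
    - (m + 1) * (⟪Z, e⟫ * ‖w‖ ^ 2 * (‖Z‖ ^ 2) ^ (-((m : ℝ) + 1) / 2 - 1))
    + (m + 1) * (m + 3) * (⟪Z, e⟫ * ⟪Z, w⟫ ^ 2 * (‖Z‖ ^ 2) ^ (-((m : ℝ) + 1) / 2 - 1 - 1))

section lines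
variable {m : ℕ} (e w X : Eu (m + 1)) (s : ℝ)

theorem line_inner (v : Eu (m + 1)) : HasDerivAt (fun s : ℝ => (⟪X + s • w, v⟫ : ℝ)) ⟪w, v⟫ s := by
  have : (fun s : ℝ => (⟪X + s • w, v⟫ : ℝ)) = fun s => ⟪X, v⟫ + s * ⟪w, v⟫ := by
    funext s; rw [inner_add_left, inner_smul_left]; simp
  rw [this]
  simpa using ((hasDerivAt_id s).mul_const (⟪w, v⟫ : ℝ)).const_add (⟪X, v⟫ : ℝ)

theorem line_normsq : HasDerivAt (fun s : ℝ => ‖X + s • w‖ ^ 2) (2 * ⟪X + s • w, w⟫) s := by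
  have : (fun s : ℝ => ‖X + s • w‖ ^ 2) = fun s => ‖X‖ ^ 2 + (2 * ⟪X, w⟫) * s + ‖w‖ ^ 2 * s ^ 2 := by
    funext s; rw [norm_add_sq_real, inner_smul_right, norm_smul, mul_pow, Real.norm_eq_abs, sq_abs]
    ring
  rw [this, inner_add_left, inner_smul_left, real_inner_self_eq_norm_sq]
  refine (quad_deriv _ _ _ s).congr_deriv ?_
  simp; ring

theorem normsq_pos {Z : Eu (m + 1)} (h : 0 < ⟪Z, e⟫) : 0 < ‖Z‖ ^ 2 := by
  have : Z ≠ 0 := by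
    rintro rfl
    simp at h
  positivity

theorem line_rpow (h : 0 < ⟪X + s • w, e⟫) (p : ℝ) :
    HasDerivAt (fun s : ℝ => (‖X + s • w‖ ^ 2) ^ p)
      (2 * ⟪X + s • w, w⟫ * p * (‖X + s • w‖ ^ 2) ^ (p - 1)) s :=
  (line_normsq w X s).rpow_const (Or.inl (normsq_pos e h).ne')

theorem Pk_deriv (h : 0 < ⟪X + s • w, e⟫) :
    HasDerivAt (fun s : ℝ => Pk e (X + s • w)) (D1 e w (X + s • w)) s := by
  unfold Pk D1
  refine ((line_inner w X s e).mul (line_rpow e w X s h _)).congr_deriv ?_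
  ring

theorem D1_deriv (h : 0 < ⟪X + s • w, e⟫) :
    HasDerivAt (fun s : ℝ => D1 e w (X + s • w)) (D2 e w (X + s • w)) s := by
  unfold D1 D2
  refine (((line_rpow e w X s h _).const_mul _).sub (((((line_inner w X s e).mul
    (line_inner w X s w)).mul (line_rpow e w X s h _))).const_mul _)).congr_deriv ?_
  rw [real_inner_self_eq_norm_sq]
  simp only [Pi.mul_apply]
  ring

end lines

theorem rpow_contOn {m : ℕ} (e : Eu (m + 1)) (p : ℝ) :
    ContinuousOn (fun Z : Eu (m + 1) => (‖Z‖ ^ 2) ^ p) {Z | 0 < ⟪Z, e⟫} := by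
  apply ContinuousOn.rpow_const (by fun_prop)
  intro Z hZ
  exact Or.inl (normsq_pos e hZ).ne'

theorem Pk_contOn {m : ℕ} (e : Eu (m + 1)) : ContinuousOn (Pk e) {Z | 0 < ⟪Z, e⟫} := by
  have := fun p => rpow_contOn e p
  unfold Pk
  exact ContinuousOn.mul (by fun_prop) (this _)

theorem D1_contOn {m : ℕ} (e w : Eu (m + 1)) : ContinuousOn (D1 e w) {Z | 0 < ⟪Z, e⟫} := by
  have := fun p => rpow_contOn e p
  unfold D1
  exact (continuousOn_const.mul (this _)).sub (continuousOn_const.mul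
    (ContinuousOn.mul (by fun_prop) (this _)))

theorem D2_contOn {m : ℕ} (e w : Eu (m + 1)) : ContinuousOn (D2 e w) {Z | 0 < ⟪Z, e⟫} := by
  have := fun p => rpow_contOn e p
  unfold D2
  refine ContinuousOn.add (ContinuousOn.sub ?_ ?_) ?_ <;>
  exact (continuousOn_const.mul (ContinuousOn.mul (by fun_prop) (this _)))

theorem Pk_bound {m : ℕ} (e Z : Eu (m + 1)) (he : ‖e‖ = 1) (X : Eu (m + 1)) (hX : ⟪Z, e⟫ = ⟪X, e⟫) :
    |Pk e Z| ≤ |⟪X, e⟫| * (‖Z‖ ^ 2) ^ (-((m : ℝ) + 1) / 2) := by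
  unfold Pk
  rw [abs_mul, hX, abs_of_nonneg (a := _ ^ _) (by positivity)]

theorem D1_bound {m : ℕ} (e w Z : Eu (m + 1)) (he : ‖e‖ = 1) (hw : ‖w‖ = 1) (hZ : 0 < ⟪Z, e⟫) :
    |D1 e w Z| ≤ (m + 2) * (‖Z‖ ^ 2) ^ (-((m : ℝ) + 1) / 2) := by
  have hp := normsq_pos e hZ
  have a1 : |⟪w, e⟫| ≤ 1 := by simpa [he, hw] using abs_real_inner_le_norm w e
  have a2 : |⟪Z, e⟫| ≤ ‖Z‖ := by simpa [he] using abs_real_inner_le_norm Z e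
  have a3 : |⟪Z, w⟫| ≤ ‖Z‖ := by simpa [hw] using abs_real_inner_le_norm Z w
  have hr : (‖Z‖ ^ 2) ^ (-((m : ℝ) + 1) / 2) = ‖Z‖ * ‖Z‖ * (‖Z‖ ^ 2) ^ (-((m : ℝ) + 1) / 2 - 1) := by
    rw [mul_comm, ← pow_two, ← Real.rpow_add_one hp.ne']; congr 1; ring
  unfold D1
  refine (abs_sub _ _).trans ?_
  rw [abs_mul, abs_mul, abs_mul, abs_mul, abs_of_nonneg (a := (‖Z‖ ^ 2) ^ _) (by positivity),
    abs_of_nonneg (a := (‖Z‖ ^ 2) ^ _) (by positivity), abs_of_nonneg (a := (m : ℝ) + 1) (by positivity)]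
  calc _ ≤ 1 * (‖Z‖ ^ 2) ^ (-((m : ℝ) + 1) / 2) +
        (m + 1) * (‖Z‖ * ‖Z‖ * (‖Z‖ ^ 2) ^ (-((m : ℝ) + 1) / 2 - 1)) := by gcongr
    _ = _ := by rw [← hr]; ring

theorem D2_bound {m : ℕ} (e w Z : Eu (m + 1)) (he : ‖e‖ = 1) (hw : ‖w‖ = 1) (t : ℝ) (ht : 0 < t)
    (hZ : t ≤ ⟪Z, e⟫) :
    |D2 e w Z| ≤ ((3 * (m + 1) + (m + 1) * (m + 3)) / t) * (‖Z‖ ^ 2) ^ (-((m : ℝ) + 1) / 2) := by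
  have hp := normsq_pos e (ht.trans_le hZ)
  have a1 : |⟪w, e⟫| ≤ 1 := by simpa [he, hw] using abs_real_inner_le_norm w e
  have a2 : |⟪Z, e⟫| ≤ ‖Z‖ := by simpa [he] using abs_real_inner_le_norm Z e
  have a3 : |⟪Z, w⟫| ≤ ‖Z‖ := by simpa [hw] using abs_real_inner_le_norm Z w
  have a4 : t ≤ ‖Z‖ := hZ.trans ((le_abs_self _).trans a2)
  have hr : (‖Z‖ ^ 2) ^ (-((m : ℝ) + 1) / 2) = ‖Z‖ * ‖Z‖ * (‖Z‖ ^ 2) ^ (-((m : ℝ) + 1) / 2 - 1) := by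
    rw [mul_comm, ← pow_two, ← Real.rpow_add_one hp.ne']; congr 1; ring
  have hr2 : (‖Z‖ ^ 2) ^ (-((m : ℝ) + 1) / 2 - 1) =
      ‖Z‖ ^ 2 * (‖Z‖ ^ 2) ^ (-((m : ℝ) + 1) / 2 - 1 - 1) := by
    rw [mul_comm, ← Real.rpow_add_one hp.ne']; congr 1; ring
  unfold D2
  refine (abs_add_le _ _).trans ((add_le_add_left (abs_sub _ _) _).trans ?_)
  simp only [abs_mul, hw, abs_pow]
  rw [abs_of_nonneg (a := (‖Z‖ ^ 2) ^ _) (by positivity),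
    abs_of_nonneg (a := (‖Z‖ ^ 2) ^ _) (by positivity), abs_of_nonneg (a := (m : ℝ) + 1) (by positivity),
    abs_of_nonneg (a := (m : ℝ) + 3) (by positivity)]
  have a5 : |(-2 : ℝ)| = 2 := by norm_num
  rw [a5]
  simp only [abs_one, one_pow, mul_one]
  calc _ ≤ 2 * (m + 1) * (1 * ‖Z‖ * (‖Z‖ ^ 2) ^ (-((m : ℝ) + 1) / 2 - 1)) +
        (m + 1) * (‖Z‖ * (‖Z‖ ^ 2) ^ (-((m : ℝ) + 1) / 2 - 1)) +
        (m + 1) * (m + 3) * (‖Z‖ * ‖Z‖ ^ 2 * (‖Z‖ ^ 2) ^ (-((m : ℝ) + 1) / 2 - 1 - 1)) := by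
        gcongr
    _ = (3 * (m + 1) + (m + 1) * (m + 3)) * (‖Z‖ * (‖Z‖ ^ 2) ^ (-((m : ℝ) + 1) / 2 - 1)) := by
        rw [mul_assoc ‖Z‖ (‖Z‖ ^ 2), ← hr2]; ring
    _ = (3 * (m + 1) + (m + 1) * (m + 3)) / t * (t * ‖Z‖ * (‖Z‖ ^ 2) ^ (-((m : ℝ) + 1) / 2 - 1)) := by
        field_simp
    _ ≤ _ := by
        rw [hr]
        gcongr

theorem D2_sum {m : ℕ} (e Z : Eu (m + 1)) (hZ : 0 < ⟪Z, e⟫) :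
    ∑ i, D2 e (EuclideanSpace.single i 1) Z = 0 := by
  have hp := normsq_pos e hZ
  have hr2 : (‖Z‖ ^ 2) ^ (-((m : ℝ) + 1) / 2 - 1) =
      ‖Z‖ ^ 2 * (‖Z‖ ^ 2) ^ (-((m : ℝ) + 1) / 2 - 1 - 1) := by
    rw [mul_comm, ← Real.rpow_add_one hp.ne']; congr 1; ring
  have h1 : ∑ i, (⟪EuclideanSpace.single i (1 : ℝ), e⟫ : ℝ) * ⟪Z, EuclideanSpace.single i (1 : ℝ)⟫ = ⟪Z, e⟫ := by
    simp [PiLp.inner_apply, EuclideanSpace.inner_single_left, EuclideanSpace.inner_single_right]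
  have h2 : ∑ i, (⟪Z, EuclideanSpace.single i (1 : ℝ)⟫ : ℝ) ^ 2 = ‖Z‖ ^ 2 := by
    rw [EuclideanSpace.real_norm_sq_eq]
    simp [EuclideanSpace.inner_single_right]
  unfold D2
  rw [Finset.sum_add_distrib, Finset.sum_sub_distrib, ← Finset.mul_sum, ← Finset.sum_mul, h1,
    ← Finset.mul_sum, ← Finset.sum_mul, ← Finset.mul_sum, ← Finset.mul_sum, ← Finset.sum_mul,
    ← Finset.mul_sum, h2]
  simp only [EuclideanSpace.norm_single, norm_one, one_pow, Finset.sum_const, Finset.card_univ,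
    Fintype.card_fin, nsmul_eq_mul, mul_one]
  rw [hr2]
  push_cast
  ring

/-- kernels which are continuous on the half space and decay like the Poisson kernel -/
def Tame {m : ℕ} (e : Eu (m + 1)) (k : Eu (m + 1) → ℝ) : Prop :=
  ContinuousOn k {Z | 0 < ⟪Z, e⟫} ∧ ∀ t1 t2 : ℝ, 0 < t1 → ∃ B : ℝ, 0 ≤ B ∧
    ∀ Z, t1 ≤ ⟪Z, e⟫ → ⟪Z, e⟫ ≤ t2 → |k Z| ≤ B * (‖Z‖ ^ 2) ^ (-((m : ℝ) + 1) / 2)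

theorem Pk_tame {m : ℕ} (e : Eu (m + 1)) (he : ‖e‖ = 1) : Tame e (Pk e) := by
  refine ⟨Pk_contOn e, fun t1 t2 h1 => ⟨|t2|, abs_nonneg _, fun Z hZ hZ2 => ?_⟩⟩
  refine (Pk_bound e Z he Z rfl).trans ?_
  gcongr ?_ * _
  exact abs_le_abs_of_nonneg (h1.le.trans hZ) hZ2

theorem D1_tame {m : ℕ} (e w : Eu (m + 1)) (he : ‖e‖ = 1) (hw : ‖w‖ = 1) : Tame e (D1 e w) :=
  ⟨D1_contOn e w, fun t1 t2 h1 => ⟨m + 2, by positivity, fun Z hZ _ =>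
    D1_bound e w Z he hw (h1.trans_le hZ)⟩⟩

theorem D2_tame {m : ℕ} (e w : Eu (m + 1)) (he : ‖e‖ = 1) (hw : ‖w‖ = 1) : Tame e (D2 e w) :=
  ⟨D2_contOn e w, fun t1 t2 h1 => ⟨_, by positivity, fun Z hZ _ =>
    D2_bound e w Z he hw t1 h1 hZ⟩⟩

theorem ker_dom {m : ℕ} (e : Eu (m + 1)) (he : ‖e‖ = 1) (ι : Eu m →ₗᵢ[ℝ] Eu (m + 1))
    (hι : ∀ y, ⟪ι y, e⟫ = 0) (t R : ℝ) (ht : 0 < t) :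
    ∃ K : ℝ, 0 ≤ K ∧ ∀ A : Eu (m + 1), t ≤ ⟪A, e⟫ → ‖A‖ ≤ R → ∀ y,
      (‖A - ι y‖ ^ 2) ^ (-((m : ℝ) + 1) / 2) ≤ K * (1 + ‖y‖ ^ 2) ^ (-((m : ℝ) + 1) / 2) := by
  set c := (1 + 2 * R ^ 2) / t ^ 2 + 2 with hc
  have hc0 : 0 < c := by positivity
  refine ⟨c ^ (-(-((m : ℝ) + 1) / 2)), by positivity, fun A hA hR y => ?_⟩
  have hZe : t ≤ ‖A - ι y‖ := by
    have h1 : ⟪A - ι y, e⟫ = ⟪A, e⟫ := by rw [inner_sub_left, hι, sub_zero]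
    have := real_inner_le_norm (A - ι y) e
    rw [he, h1] at this
    linarith
  have hy : ‖y‖ ≤ R + ‖A - ι y‖ := by
    rw [← ι.norm_map y]
    calc ‖ι y‖ = ‖A - (A - ι y)‖ := by congr 1; abel
      _ ≤ ‖A‖ + ‖A - ι y‖ := norm_sub_le _ _
      _ ≤ _ := by gcongr
  set N := ‖A - ι y‖
  have hN : 0 < N := ht.trans_le hZe
  have h1 : 1 + ‖y‖ ^ 2 ≤ c * N ^ 2 := by
    have a : ‖y‖ ^ 2 ≤ (R + N) ^ 2 := by gcongr
    have b : 1 + 2 * R ^ 2 ≤ (1 + 2 * R ^ 2) / t ^ 2 * N ^ 2 := by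
      rw [div_mul_eq_mul_div, le_div_iff₀ (by positivity)]
      gcongr
    rw [hc, add_mul]
    nlinarith [sq_nonneg (R - N)]
  have h2 : (c * N ^ 2) ^ (-((m : ℝ) + 1) / 2) ≤ (1 + ‖y‖ ^ 2) ^ (-((m : ℝ) + 1) / 2) := by
    apply Real.rpow_le_rpow_of_nonpos (by positivity) h1
    have : (0 : ℝ) ≤ m := by positivity
    linarith
  calc (N ^ 2) ^ (-((m : ℝ) + 1) / 2)
      = c ^ (-(-((m : ℝ) + 1) / 2)) * (c * N ^ 2) ^ (-((m : ℝ) + 1) / 2) := by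
        rw [Real.mul_rpow hc0.le (by positivity), ← mul_assoc, ← Real.rpow_add hc0]
        simp
    _ ≤ _ := by gcongr

theorem base_integrable (m : ℕ) :
    Integrable (fun y : Eu m => (1 + ‖y‖ ^ 2) ^ (-((m : ℝ) + 1) / 2)) := by
  have := integrable_rpow_neg_one_add_norm_sq (E := Eu m) (μ := volume) (r := (m : ℝ) + 1) (by simp)
  exact this

theorem shift_inner {m : ℕ} (e : Eu (m + 1)) (ι : Eu m →ₗᵢ[ℝ] Eu (m + 1)) (hι : ∀ y, ⟪ι y, e⟫ = 0)
    (A : Eu (m + 1)) (y : Eu m) : ⟪A - ι y, e⟫ = ⟪A, e⟫ := by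
  rw [inner_sub_left, hι, sub_zero]

theorem tame_meas {m : ℕ} (e : Eu (m + 1)) (ι : Eu m →ₗᵢ[ℝ] Eu (m + 1)) (hι : ∀ y, ⟪ι y, e⟫ = 0) (f : Eu m → ℝ) (hf : Continuous f)
    (k : Eu (m + 1) → ℝ) (hk : Tame e k) (A : Eu (m + 1)) (hA : 0 < ⟪A, e⟫) :
    AEStronglyMeasurable (fun y => k (A - ι y) * f y) volume := by
  apply Continuous.aestronglyMeasurable
  refine Continuous.mul ?_ hf
  refine hk.1.comp_continuous (continuous_const.sub ι.continuous) fun y => ?_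
  simpa [inner_sub_left, hι] using hA

theorem tame_dom {m : ℕ} (e : Eu (m + 1)) (he : ‖e‖ = 1) (ι : Eu m →ₗᵢ[ℝ] Eu (m + 1)) (hι : ∀ y, ⟪ι y, e⟫ = 0) (f : Eu m → ℝ) (M : ℝ) (hM : ∀ y, |f y| ≤ M)
    (k : Eu (m + 1) → ℝ) (hk : Tame e k) (t R : ℝ) (ht : 0 < t) :
    ∃ K : ℝ, ∀ A : Eu (m + 1), t ≤ ⟪A, e⟫ → ‖A‖ ≤ R → ∀ y,
      ‖k (A - ι y) * f y‖ ≤ K * (1 + ‖y‖ ^ 2) ^ (-((m : ℝ) + 1) / 2) := by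
  obtain ⟨B, hB0, hB⟩ := hk.2 t R ht
  obtain ⟨K, hK0, hK⟩ := ker_dom e he ι hι t R ht
  refine ⟨B * K * M, fun A hA hR y => ?_⟩
  have h1 := hB (A - ι y) (by rwa [shift_inner e ι hι]) (by
    rw [shift_inner e ι hι]
    have := real_inner_le_norm A e
    rw [he] at this
    linarith)
  have h2 := hK A hA hR y
  have hM0 : 0 ≤ M := (abs_nonneg _).trans (hM y)
  rw [norm_mul, Real.norm_eq_abs, Real.norm_eq_abs]
  calc |k (A - ι y)| * |f y| ≤ (B * (K * (1 + ‖y‖ ^ 2) ^ (-((m : ℝ) + 1) / 2))) * M := by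
        gcongr
        · exact h1.trans (by gcongr)
        · exact hM y
    _ = _ := by ring

theorem tame_integrable {m : ℕ} (e : Eu (m + 1)) (he : ‖e‖ = 1) (ι : Eu m →ₗᵢ[ℝ] Eu (m + 1)) (hι : ∀ y, ⟪ι y, e⟫ = 0) (f : Eu m → ℝ) (hf : Continuous f) (M : ℝ) (hM : ∀ y, |f y| ≤ M)
    (k : Eu (m + 1) → ℝ) (hk : Tame e k) (A : Eu (m + 1)) (hA : 0 < ⟪A, e⟫) :
    Integrable (fun y => k (A - ι y) * f y) := by
  obtain ⟨K, hK⟩ := tame_dom e he ι hι f M hM k hk ⟪A, e⟫ ‖A‖ hA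
  exact ((base_integrable m).const_mul K).mono' (tame_meas e ι hι f hf k hk A hA)
    (Eventually.of_forall fun y => hK A le_rfl le_rfl y)

theorem diff_int {m : ℕ} (e : Eu (m + 1)) (he : ‖e‖ = 1) (ι : Eu m →ₗᵢ[ℝ] Eu (m + 1)) (hι : ∀ y, ⟪ι y, e⟫ = 0) (f : Eu m → ℝ) (hf : Continuous f) (M : ℝ) (hM : ∀ y, |f y| ≤ M)
    (k k' : Eu (m + 1) → ℝ) (hk : Tame e k) (hk' : Tame e k') (w : Eu (m + 1))
    (hw : ‖w‖ = 1)
    (hkk : ∀ X s, 0 < ⟪X + s • w, e⟫ → HasDerivAt (fun s : ℝ => k (X + s • w)) (k' (X + s • w)) s)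
    (X : Eu (m + 1)) (s0 : ℝ) (hX : 0 < ⟪X + s0 • w, e⟫) :
    HasDerivAt (fun s : ℝ => ∫ y, k (X + s • w - ι y) * f y)
      (∫ y, k' (X + s0 • w - ι y) * f y) s0 := by
  set t : ℝ := ⟪X + s0 • w, e⟫ with ht
  have hnear : ∀ s ∈ ball s0 (t / 2), t / 2 ≤ ⟪X + s • w, e⟫ := by
    intro s hs
    rw [mem_ball, Real.dist_eq] at hs
    have h1 : |⟪w, e⟫| ≤ 1 := by simpa [he, hw] using abs_real_inner_le_norm w e
    have h2 : ⟪X + s • w, e⟫ = t + (s - s0) * ⟪w, e⟫ := by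
      rw [ht, inner_add_left, inner_add_left, inner_smul_left, inner_smul_left]; simp; ring
    have h3 : |(s - s0) * ⟪w, e⟫| ≤ t / 2 := by
      rw [abs_mul]; nlinarith [abs_nonneg (s - s0), abs_nonneg (⟪w, e⟫ : ℝ)]
    rw [h2]
    linarith [neg_abs_le ((s - s0) * ⟪w, e⟫)]
  have hR : ∀ s ∈ ball s0 (t / 2), ‖X + s • w‖ ≤ ‖X‖ + |s0| + t / 2 := by
    intro s hs
    rw [mem_ball, Real.dist_eq] at hs
    have h1 := norm_add_le X (s • w)
    rw [norm_smul, hw, mul_one, Real.norm_eq_abs] at h1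
    have h2 : |s| ≤ |s0| + |s - s0| := by
      have := abs_add_le s0 (s - s0)
      simpa using this
    linarith
  obtain ⟨K, hK⟩ := tame_dom e he ι hι f M hM k' hk' (t / 2) (‖X‖ + |s0| + t / 2) (by positivity)
  have hball : ball s0 (t / 2) ∈ nhds s0 := ball_mem_nhds _ (by positivity)
  refine (hasDerivAt_integral_of_dominated_loc_of_deriv_le (μ := volume)
    (F := fun s y => k (X + s • w - ι y) * f y) (F' := fun s y => k' (X + s • w - ι y) * f y)
    (bound := fun y => K * (1 + ‖y‖ ^ 2) ^ (-((m : ℝ) + 1) / 2)) hball ?_ ?_ ?_ ?_ ?_ ?_).2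
  · filter_upwards [hball] with s hs
    exact tame_meas e ι hι f hf k hk _ (by have := hnear s hs; linarith)
  · exact tame_integrable e he ι hι f hf M hM k hk _ hX
  · exact tame_meas e ι hι f hf k' hk' _ hX
  · exact Eventually.of_forall fun y s hs => hK _ (hnear s hs) (hR s hs) y
  · exact (base_integrable m).const_mul K
  · refine Eventually.of_forall fun y s hs => ?_
    have e1 : ∀ s : ℝ, X + s • w - ι y = (X - ι y) + s • w := fun s => by abel
    simp only [e1]
    refine (hkk (X - ι y) s ?_).mul_const _
    rw [← e1, shift_inner e ι hι]
    have := hnear s hs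
    linarith


theorem inner_e_smul {m : ℕ} (e : Eu (m + 1)) (he : ‖e‖ = 1) (ι : Eu m →ₗᵢ[ℝ] Eu (m + 1))
    (hι : ∀ y, ⟪ι y, e⟫ = 0) (X : Eu (m + 1)) (z : Eu m) :
    (⟪X + (⟪X, e⟫ : ℝ) • (ι z - e), e⟫ : ℝ) = 0 := by
  rw [inner_add_left, inner_smul_left, inner_sub_left, hι, real_inner_self_eq_norm_sq, he]
  simp

/-- the Poisson integral, in the form which is continuous up to the boundary -/
def Vp {m : ℕ} (e : Eu (m + 1)) (ι : Eu m →ₗᵢ[ℝ] Eu (m + 1)) (u : Eu (m + 1) → ℝ)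
    (X : Eu (m + 1)) : ℝ :=
  2 / sphereArea (m + 1) *
    ∫ z : Eu m, (1 + ‖z‖ ^ 2) ^ (-((m : ℝ) + 1) / 2) * u (X + (⟪X, e⟫ : ℝ) • (ι z - e))

/-- the Poisson integral -/
def Wp {m : ℕ} (e : Eu (m + 1)) (ι : Eu m →ₗᵢ[ℝ] Eu (m + 1)) (u : Eu (m + 1) → ℝ)
    (X : Eu (m + 1)) : ℝ :=
  2 / sphereArea (m + 1) * ∫ y : Eu m, Pk e (X - ι y) * u (ι y)

theorem arg_cont {m : ℕ} (e : Eu (m + 1)) (he : ‖e‖ = 1) (ι : Eu m →ₗᵢ[ℝ] Eu (m + 1)) (hι : ∀ y, ⟪ι y, e⟫ = 0) (u : Eu (m + 1) → ℝ) (O : Set (Eu (m + 1))) (hO : ∀ X, 0 ≤ ⟪X, e⟫ → X ∈ O) (huc : ContinuousOn u O)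
    (z : Eu m) : Continuous fun X : Eu (m + 1) => u (X + (⟪X, e⟫ : ℝ) • (ι z - e)) := by
  refine huc.comp_continuous (by fun_prop) fun X => hO _ ?_
  rw [inner_e_smul e he ι hι]

theorem arg_cont2 {m : ℕ} (e : Eu (m + 1)) (he : ‖e‖ = 1) (ι : Eu m →ₗᵢ[ℝ] Eu (m + 1)) (hι : ∀ y, ⟪ι y, e⟫ = 0) (u : Eu (m + 1) → ℝ) (O : Set (Eu (m + 1))) (hO : ∀ X, 0 ≤ ⟪X, e⟫ → X ∈ O) (huc : ContinuousOn u O)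
    (X : Eu (m + 1)) : Continuous fun z : Eu m => u (X + (⟪X, e⟫ : ℝ) • (ι z - e)) := by
  have := ι.continuous
  refine huc.comp_continuous (by fun_prop) fun z => hO _ ?_
  rw [inner_e_smul e he ι hι]

theorem wt_cont {m : ℕ} : Continuous fun z : Eu m => (1 + ‖z‖ ^ 2) ^ (-((m : ℝ) + 1) / 2) := by
  refine Continuous.rpow_const (by fun_prop) fun z => Or.inl ?_
  positivity

theorem arg_bound {m : ℕ} (e : Eu (m + 1)) (he : ‖e‖ = 1) (ι : Eu m →ₗᵢ[ℝ] Eu (m + 1)) (hι : ∀ y, ⟪ι y, e⟫ = 0) (u : Eu (m + 1) → ℝ) (M : ℝ) (hM : ∀ X, 0 ≤ ⟪X, e⟫ → |u X| ≤ M)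
    (X : Eu (m + 1)) (z : Eu m) :
    ‖(1 + ‖z‖ ^ 2) ^ (-((m : ℝ) + 1) / 2) * u (X + (⟪X, e⟫ : ℝ) • (ι z - e))‖ ≤
      (1 + ‖z‖ ^ 2) ^ (-((m : ℝ) + 1) / 2) * M := by
  rw [norm_mul, Real.norm_of_nonneg (by positivity)]
  gcongr
  exact hM _ (inner_e_smul e he ι hι X z).ge

theorem Vp_cont {m : ℕ} (e : Eu (m + 1)) (he : ‖e‖ = 1) (ι : Eu m →ₗᵢ[ℝ] Eu (m + 1)) (hι : ∀ y, ⟪ι y, e⟫ = 0) (u : Eu (m + 1) → ℝ) (O : Set (Eu (m + 1))) (hO : ∀ X, 0 ≤ ⟪X, e⟫ → X ∈ O) (M : ℝ) (huc : ContinuousOn u O) (hM : ∀ X, 0 ≤ ⟪X, e⟫ → |u X| ≤ M)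
    : Continuous (Vp e ι u) := by
  unfold Vp
  refine continuous_const.mul ?_
  refine continuous_of_dominated (bound := fun z : Eu m => (1 + ‖z‖ ^ 2) ^ (-((m : ℝ) + 1) / 2) * M)
    (fun X => ?_) (fun X => Eventually.of_forall fun z => arg_bound e he ι hι u M hM X z)
    ((base_integrable m).mul_const M) (Eventually.of_forall fun z => ?_)
  · exact (wt_cont.mul (arg_cont2 e he ι hι u O hO huc X)).aestronglyMeasurable
  · exact continuous_const.mul (arg_cont e he ι hι u O hO huc z)

theorem Vp_bound {m : ℕ} (e : Eu (m + 1)) (he : ‖e‖ = 1) (ι : Eu m →ₗᵢ[ℝ] Eu (m + 1)) (hι : ∀ y, ⟪ι y, e⟫ = 0) (u : Eu (m + 1) → ℝ) (M : ℝ) (hM : ∀ X, 0 ≤ ⟪X, e⟫ → |u X| ≤ M)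
    (X : Eu (m + 1)) : |Vp e ι u X| ≤ M := by
  have hs : 0 < sphereArea (m + 1) := sphereArea_pos (by omega)
  unfold Vp
  rw [abs_mul, abs_of_pos (by positivity)]
  have h1 := norm_integral_le_of_norm_le ((base_integrable m).mul_const M)
    (Eventually.of_forall fun z => arg_bound e he ι hι u M hM X z)
  rw [integral_mul_const, poisson_norm, Real.norm_eq_abs] at h1
  calc _ ≤ 2 / sphereArea (m + 1) * (sphereArea (m + 1) / 2 * M) := by gcongr
    _ = M := by field_simp

theorem Vp_bdry {m : ℕ} (e : Eu (m + 1)) (ι : Eu m →ₗᵢ[ℝ] Eu (m + 1)) (u : Eu (m + 1) → ℝ)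
    (X : Eu (m + 1)) (hX : ⟪X, e⟫ = 0) : Vp e ι u X = u X := by
  have hs : 0 < sphereArea (m + 1) := sphereArea_pos (by omega)
  unfold Vp
  rw [hX]
  simp only [zero_smul, add_zero]
  rw [integral_mul_const, poisson_norm]
  field_simp

theorem Vp_eq {m : ℕ} (e : Eu (m + 1)) (he : ‖e‖ = 1) (ι : Eu m →ₗᵢ[ℝ] Eu (m + 1)) (hι : ∀ y, ⟪ι y, e⟫ = 0) (hdec : ∀ X, ∃ y, X = ι y + (⟪X, e⟫ : ℝ) • e) (u : Eu (m + 1) → ℝ)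
    (X : Eu (m + 1)) (hX : 0 < ⟪X, e⟫) : Vp e ι u X = Wp e ι u X := by
  obtain ⟨y0, hy⟩ := hdec X
  set t : ℝ := ⟪X, e⟫ with ht
  unfold Vp Wp
  congr 1
  rw [← ht]
  rw [← integral_add_left_eq_self (μ := volume) (fun y : Eu m => Pk e (X - ι y) * u (ι y)) y0]
  have h := Measure.integral_comp_smul (volume : Measure (Eu m))
    (fun y : Eu m => Pk e (X - ι (y0 + y)) * u (ι (y0 + y))) t
  rw [finrank_euclideanSpace_fin, abs_of_pos (by positivity), smul_eq_mul] at h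
  have h2 : ∫ y : Eu m, Pk e (X - ι (y0 + y)) * u (ι (y0 + y)) =
      t ^ m * ∫ y : Eu m, Pk e (X - ι (y0 + t • y)) * u (ι (y0 + t • y)) := by
    rw [h]; field_simp
  rw [h2, ← integral_const_mul]
  refine integral_congr_ae (Eventually.of_forall fun z => ?_)
  have e1 : X + t • (ι z - e) = ι (y0 + t • z) := by
    rw [hy, map_add, map_smul]; module
  have e2 : X - ι (y0 + t • z) = t • (e - ι z) := by
    rw [hy, map_add, map_smul]; module
  have e3 : ‖e - ι z‖ ^ 2 = 1 + ‖z‖ ^ 2 := by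
    rw [norm_sub_sq_real, real_inner_comm, hι, he, ι.norm_map]; ring
  have e4 : (⟪e - ι z, e⟫ : ℝ) = 1 := by
    rw [inner_sub_left, hι, real_inner_self_eq_norm_sq, he]; norm_num
  have e5 : (t ^ 2) ^ (-((m : ℝ) + 1) / 2) = (t ^ (m + 1))⁻¹ := by
    rw [← Real.rpow_natCast, ← Real.rpow_mul hX.le, ← Real.rpow_natCast, ← Real.rpow_neg hX.le]
    congr 1; push_cast; ring
  simp only
  rw [e1, e2]
  unfold Pk
  rw [norm_smul, mul_pow, Real.norm_eq_abs, sq_abs, e3, inner_smul_left, e4,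
    Real.mul_rpow (by positivity) (by positivity), e5]
  simp only [conj_trivial]
  field_simp
  ring

theorem Wp_deriv {m : ℕ} (e : Eu (m + 1)) (he : ‖e‖ = 1) (ι : Eu m →ₗᵢ[ℝ] Eu (m + 1)) (hι : ∀ y, ⟪ι y, e⟫ = 0) (u : Eu (m + 1) → ℝ) (O : Set (Eu (m + 1))) (hO : ∀ X, 0 ≤ ⟪X, e⟫ → X ∈ O) (M : ℝ) (huc : ContinuousOn u O) (hM : ∀ X, 0 ≤ ⟪X, e⟫ → |u X| ≤ M)
    (w X : Eu (m + 1)) (hw : ‖w‖ = 1) (s : ℝ) (hX : 0 < ⟪X + s • w, e⟫) :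
    HasDerivAt (fun s : ℝ => Wp e ι u (X + s • w))
      (2 / sphereArea (m + 1) * ∫ y : Eu m, D1 e w (X + s • w - ι y) * u (ι y)) s := by
  unfold Wp
  refine HasDerivAt.const_mul _ ?_
  exact diff_int e he ι hι (fun y => u (ι y))
    (huc.comp_continuous ι.continuous fun y => hO _ (hι y).ge) M (fun y => hM _ (hι y).ge)
    (Pk e) (D1 e w) (Pk_tame e he) (D1_tame e w he hw) w hw (fun X s h => Pk_deriv e w X s h) X s hX

theorem Wp_deriv2 {m : ℕ} (e : Eu (m + 1)) (he : ‖e‖ = 1) (ι : Eu m →ₗᵢ[ℝ] Eu (m + 1)) (hι : ∀ y, ⟪ι y, e⟫ = 0) (u : Eu (m + 1) → ℝ) (O : Set (Eu (m + 1))) (hO : ∀ X, 0 ≤ ⟪X, e⟫ → X ∈ O) (M : ℝ) (huc : ContinuousOn u O) (hM : ∀ X, 0 ≤ ⟪X, e⟫ → |u X| ≤ M)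
    (w X : Eu (m + 1)) (hw : ‖w‖ = 1) (s : ℝ) (hX : 0 < ⟪X + s • w, e⟫) :
    HasDerivAt (fun s : ℝ => 2 / sphereArea (m + 1) * ∫ y : Eu m, D1 e w (X + s • w - ι y) * u (ι y))
      (2 / sphereArea (m + 1) * ∫ y : Eu m, D2 e w (X + s • w - ι y) * u (ι y)) s := by
  refine HasDerivAt.const_mul _ ?_
  exact diff_int e he ι hι (fun y => u (ι y))
    (huc.comp_continuous ι.continuous fun y => hO _ (hι y).ge) M (fun y => hM _ (hι y).ge)
    (D1 e w) (D2 e w) (D1_tame e w he hw) (D2_tame e w he hw) w hw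
    (fun X s h => D1_deriv e w X s h) X s hX

theorem line_pos {m : ℕ} (e : Eu (m + 1)) (w X : Eu (m + 1)) (s0 : ℝ) (hX : 0 < ⟪X + s0 • w, e⟫) :
    ∀ᶠ s in nhds s0, 0 < (⟪X + s • w, e⟫ : ℝ) := by
  have hc : Continuous fun s : ℝ => (⟪X + s • w, e⟫ : ℝ) := by fun_prop
  exact hc.continuousAt.eventually (lt_mem_nhds hX)

theorem Vp_lap {m : ℕ} (e : Eu (m + 1)) (he : ‖e‖ = 1) (ι : Eu m →ₗᵢ[ℝ] Eu (m + 1)) (hι : ∀ y, ⟪ι y, e⟫ = 0) (hdec : ∀ X, ∃ y, X = ι y + (⟪X, e⟫ : ℝ) • e) (u : Eu (m + 1) → ℝ) (O : Set (Eu (m + 1))) (hO : ∀ X, 0 ≤ ⟪X, e⟫ → X ∈ O) (M : ℝ) (huc : ContinuousOn u O) (hM : ∀ X, 0 ≤ ⟪X, e⟫ → |u X| ≤ M)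
    (X : Eu (m + 1)) (hX : 0 < ⟪X, e⟫) : HasLap (Vp e ι u) X 0 := by
  have hw : ∀ i : Fin (m + 1), ‖(EuclideanSpace.single i (1 : ℝ) : Eu (m + 1))‖ = 1 := by
    intro i; simp
  refine ⟨fun i => 2 / sphereArea (m + 1) *
    ∫ y : Eu m, D2 e (EuclideanSpace.single i 1) (X - ι y) * u (ι y), ?_, fun i =>
    ⟨fun s => 2 / sphereArea (m + 1) *
      ∫ y : Eu m, D1 e (EuclideanSpace.single i 1) (X + s • EuclideanSpace.single i 1 - ι y) * u (ι y),
      ?_, ?_⟩⟩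
  · rw [← Finset.mul_sum, ← integral_finsetSum]
    · have : ∀ y : Eu m, ∑ i, D2 e (EuclideanSpace.single i 1) (X - ι y) * u (ι y) = 0 := by
        intro y
        rw [← Finset.sum_mul, D2_sum e _ (by rwa [shift_inner e ι hι]), zero_mul]
      simp [this]
    · intro i _
      exact tame_integrable e he ι hι (fun y => u (ι y))
        (huc.comp_continuous ι.continuous fun y => hO _ (hι y).ge) M (fun y => hM _ (hι y).ge)
        _ (D2_tame e _ he (hw i)) X hX
  · filter_upwards [line_pos e (EuclideanSpace.single i 1) X 0 (by simpa using hX)] with s hs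
    refine (Wp_deriv e he ι hι u O hO M huc hM _ X (hw i) s hs).congr_of_eventuallyEq ?_
    filter_upwards [line_pos e (EuclideanSpace.single i 1) X s hs] with r hr
    exact Vp_eq e he ι hι hdec u _ hr
  · have := Wp_deriv2 e he ι hι u O hO M huc hM (EuclideanSpace.single i 1) X (hw i) 0 (by simpa using hX)
    simpa using this

theorem u_eq {m : ℕ} (e : Eu (m + 1)) (he : ‖e‖ = 1) (ι : Eu m →ₗᵢ[ℝ] Eu (m + 1)) (hι : ∀ y, ⟪ι y, e⟫ = 0) (hdec : ∀ X, ∃ y, X = ι y + (⟪X, e⟫ : ℝ) • e) (u : Eu (m + 1) → ℝ) (O : Set (Eu (m + 1))) (hO : ∀ X, 0 ≤ ⟪X, e⟫ → X ∈ O) (M : ℝ) (hM : ∀ X, 0 ≤ ⟪X, e⟫ → |u X| ≤ M)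
    (hOo : IsOpen O) (hu : IsHarmonicOn u O) (X : Eu (m + 1)) (hX : 0 < ⟪X, e⟫) :
    u X = Wp e ι u X := by
  have huc : ContinuousOn u O := hu.1.continuousOn
  have hM0 : 0 ≤ M := (abs_nonneg _).trans (hM X hX.le)
  have hVc := Vp_cont e he ι hι u O hO M huc hM
  have hVb := Vp_bound e he ι hι u M hM
  have huc' : ContinuousOn u {X | 0 ≤ ⟪X, e⟫} := huc.mono hO
  have lu : ∀ X, 0 < ⟪X, e⟫ → HasLap u X 0 := fun X hX => c2_lap u O hOo hu X (hO X hX.le)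
  have lV := Vp_lap e he ι hι hdec u O hO M huc hM
  rw [← Vp_eq e he ι hι hdec u X hX]
  apply le_antisymm
  · have := halfspace_max e he (fun X => u X - Vp e ι u X) (huc'.sub hVc.continuousOn) (2 * M)
      (by positivity) (fun X hX => by
        have a := abs_le.1 (hM X hX)
        have b := abs_le.1 (hVb X)
        linarith [a.2, b.1]) (fun X hX => by rw [Vp_bdry e ι u X hX]; simp)
      (fun X hX => by simpa using (lu X hX).sub (lV X hX)) X hX
    linarith
  · have := halfspace_max e he (fun X => Vp e ι u X - u X) (hVc.continuousOn.sub huc') (2 * M)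
      (by positivity) (fun X hX => by
        have a := abs_le.1 (hM X hX)
        have b := abs_le.1 (hVb X)
        linarith [a.1, b.2]) (fun X hX => by rw [Vp_bdry e ι u X hX]; simp)
      (fun X hX => by simpa using (lV X hX).sub (lu X hX)) X hX
    linarith


theorem D1_qform {m : ℕ} (e w Z : Eu (m + 1)) (hZ : 0 < ⟪Z, e⟫) :
    D1 e w Z = qform e w Z * (‖Z‖ ^ 2) ^ (-((m : ℝ) + 3) / 2) := by
  have hp := normsq_pos e hZ
  have h1 : -((m : ℝ) + 1) / 2 - 1 = -((m : ℝ) + 3) / 2 := by ring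
  have hr : (‖Z‖ ^ 2) ^ (-((m : ℝ) + 1) / 2) = ‖Z‖ ^ 2 * (‖Z‖ ^ 2) ^ (-((m : ℝ) + 3) / 2) := by
    rw [mul_comm, ← Real.rpow_add_one hp.ne']; congr 1; ring
  unfold D1 qform
  rw [h1, hr]
  ring

theorem D1_l1 {m : ℕ} (hm : 1 ≤ m) (e l : Eu (m + 1)) (he : ‖e‖ = 1) (hl : ‖l‖ = 1)
    (ι : Eu m →ₗᵢ[ℝ] Eu (m + 1)) (hι : ∀ y, ⟪ι y, e⟫ = 0)
    (hmp : MeasurePreserving (fun p : ℝ × Eu m => ι p.2 + p.1 • e)) (d : ℝ) (hd : 0 < d) :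
    ∫ y : Eu m, |D1 e l (d • e - ι y)| ≤ d⁻¹ *
      (sphereArea m * (2 * ((m : ℝ) ^ ((m : ℝ) / 2) / ((m : ℝ) + 1) ^ (((m : ℝ) + 1) / 2)))) := by
  have h := Measure.integral_comp_smul (volume : Measure (Eu m))
    (fun y : Eu m => |D1 e l (d • e - ι y)|) (-d)
  rw [finrank_euclideanSpace_fin, abs_inv, abs_pow, abs_neg, abs_of_pos hd, smul_eq_mul] at h
  have h2 : ∫ y : Eu m, |D1 e l (d • e - ι y)| =
      d ^ m * ∫ y : Eu m, |D1 e l (d • e - ι (-d • y))| := by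
    rw [h]; field_simp
  have h3 : ∀ z : Eu m, |D1 e l (d • e - ι (-d • z))| =
      (d ^ (m + 1))⁻¹ * (|qform e l (ι z + e)| * (1 + ‖z‖ ^ 2) ^ (-((m : ℝ) + 3) / 2)) := by
    intro z
    have e1 : d • e - ι (-d • z) = d • (ι z + e) := by rw [map_smul]; module
    have e3 : ‖ι z + e‖ ^ 2 = 1 + ‖z‖ ^ 2 := by
      rw [norm_add_sq_real, hι, he, ι.norm_map]; ring
    have e4 : (⟪ι z + e, e⟫ : ℝ) = 1 := by
      rw [inner_add_left, hι, real_inner_self_eq_norm_sq, he]; norm_num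
    have e5 : (d ^ 2) ^ (-((m : ℝ) + 3) / 2) = (d ^ (m + 3))⁻¹ := by
      rw [← Real.rpow_natCast, ← Real.rpow_mul hd.le, ← Real.rpow_natCast, ← Real.rpow_neg hd.le]
      congr 1; push_cast; ring
    rw [e1, D1_qform _ _ _ (by rw [inner_smul_left, e4]; simpa using hd), abs_mul, qform_smul,
      norm_smul, mul_pow, Real.norm_eq_abs, sq_abs, e3, Real.mul_rpow (by positivity) (by positivity),
      e5, abs_mul, abs_of_nonneg (a := (1 + ‖z‖ ^ 2) ^ _) (by positivity),
      abs_of_pos (a := (d ^ (m + 3))⁻¹) (by positivity)]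
    field_simp
    ring
  rw [h2]
  simp_rw [h3]
  rw [integral_const_mul, ← mul_assoc]
  have e6 : d ^ m * (d ^ (m + 1))⁻¹ = d⁻¹ := by field_simp; ring
  rw [e6]
  gcongr
  exact K_le hm e l he hl ι hι hmp

theorem Cconst_succ (m : ℕ) : Cconst (m + 1) = 2 / sphereArea (m + 1) *
      (sphereArea m * (2 * ((m : ℝ) ^ ((m : ℝ) / 2) / ((m : ℝ) + 1) ^ (((m : ℝ) + 1) / 2)))) := by
  unfold Cconst
  push_cast
  rw [add_sub_cancel_right]
  have : 0 < sphereArea (m + 1) := sphereArea_pos (by omega)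
  field_simp
  ring

theorem halfspace_fderiv {m : ℕ} (hm : 1 ≤ m) (e : Eu (m + 1)) (he : ‖e‖ = 1)
    (u : Eu (m + 1) → ℝ) (O : Set (Eu (m + 1))) (hO : ∀ X, 0 ≤ ⟪X, e⟫ → X ∈ O) (M : ℝ)
    (hM : ∀ X, 0 ≤ ⟪X, e⟫ → |u X| ≤ M) (hOo : IsOpen O) (hu : IsHarmonicOn u O)
    (d : ℝ) (hd : 0 < d) : ‖fderiv ℝ u (d • e)‖ ≤ Cconst (m + 1) / d * M := by
  obtain ⟨ι, hι, hdec, hmp⟩ := exists_setup m e he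
  have huc : ContinuousOn u O := hu.1.continuousOn
  have hde : (⟪d • e, e⟫ : ℝ) = d := by
    rw [inner_smul_left, real_inner_self_eq_norm_sq, he]; simp
  have hM0 : 0 ≤ M := (abs_nonneg _).trans (hM (d • e) (by rw [hde]; exact hd.le))
  have hs : 0 < sphereArea (m + 1) := sphereArea_pos (by omega)
  have hsm : 0 < sphereArea m := sphereArea_pos hm
  have hC : 0 ≤ Cconst (m + 1) := by rw [Cconst_succ]; positivity
  refine ContinuousLinearMap.opNorm_le_of_unit_norm (by positivity) fun l hl => ?_
  have hdiff : DifferentiableAt ℝ u (d • e) :=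
    (hu.1.differentiableOn (by norm_num)).differentiableAt (hOo.mem_nhds (hO _ (by rw [hde]; exact hd.le)))
  have hpos0 : 0 < (⟪d • e + (0 : ℝ) • l, e⟫ : ℝ) := by simpa [hde] using hd
  have h1 : HasDerivAt (fun s : ℝ => u (d • e + s • l)) (fderiv ℝ u (d • e) l) 0 := by
    have hline : HasDerivAt (fun s : ℝ => d • e + s • l) l 0 := by
      simpa using ((hasDerivAt_id (0 : ℝ)).smul_const l).const_add (d • e)
    have hd' : HasFDerivAt u (fderiv ℝ u (d • e)) (d • e + (0 : ℝ) • l) := by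
      simpa using hdiff.hasFDerivAt
    exact hd'.comp_hasDerivAt 0 hline
  have h2 : HasDerivAt (fun s : ℝ => u (d • e + s • l))
      (2 / sphereArea (m + 1) * ∫ y : Eu m, D1 e l (d • e + (0 : ℝ) • l - ι y) * u (ι y)) 0 := by
    refine (Wp_deriv e he ι hι u O hO M huc hM l (d • e) hl 0 hpos0).congr_of_eventuallyEq ?_
    filter_upwards [line_pos e l (d • e) 0 hpos0] with s hs
    exact u_eq e he ι hι hdec u O hO M hM hOo hu _ hs
  rw [h1.unique h2]
  simp only [zero_smul, add_zero]
  have hIntegr : Integrable (fun y : Eu m => |D1 e l (d • e - ι y)|) := by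
    have := (tame_integrable e he ι hι (fun _ => (1 : ℝ)) continuous_const 1 (fun _ => by simp)
      _ (D1_tame e l he hl) (d • e) (by rw [hde]; exact hd)).abs
    simpa using this
  have h3 := norm_integral_le_of_norm_le (f := fun y : Eu m => D1 e l (d • e - ι y) * u (ι y))
    (hIntegr.mul_const M) (Eventually.of_forall fun y => by
      rw [norm_mul, Real.norm_eq_abs, Real.norm_eq_abs]
      gcongr
      exact hM _ (hι y).ge)
  rw [integral_mul_const] at h3
  rw [norm_mul, Real.norm_of_nonneg (by positivity)]
  calc _ ≤ 2 / sphereArea (m + 1) * ((d⁻¹ * (sphereArea m * (2 * ((m : ℝ) ^ ((m : ℝ) / 2) /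
          ((m : ℝ) + 1) ^ (((m : ℝ) + 1) / 2))))) * M) := by
        gcongr
        refine h3.trans ?_
        gcongr
        exact D1_l1 hm e l he hl ι hι hmp d hd
    _ = _ := by rw [Cconst_succ]; ring

theorem halfspace_fderiv_at {m : ℕ} (hm : 1 ≤ m) (e q : Eu (m + 1)) (he : ‖e‖ = 1)
    (u : Eu (m + 1) → ℝ) (O : Set (Eu (m + 1))) (hO : ∀ X, 0 ≤ ⟪X - q, e⟫ → X ∈ O) (M : ℝ)
    (hM : ∀ X ∈ O, |u X| ≤ M) (hOo : IsOpen O) (hu : IsHarmonicOn u O)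
    (d : ℝ) (hd : 0 < d) : ‖fderiv ℝ u (q + d • e)‖ ≤ Cconst (m + 1) / d * M := by
  have hO' : ∀ X, 0 ≤ ⟪X, e⟫ → q + X ∈ O := fun X hX => hO _ (by simpa using hX)
  have := halfspace_fderiv hm e he (fun X => u (q + X)) {X | q + X ∈ O} hO' M
    (fun X hX => hM _ (hO' X hX)) (hOo.preimage (by fun_prop)) ⟨?_, ?_⟩ d hd
  · simpa [fderiv_comp_add_left] using this
  · exact hu.1.comp (by fun_prop) fun X hX => hX
  · intro X hX
    have h := hu.2 (q + X) hX
    rw [← h]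
    refine Finset.sum_congr rfl fun i _ => ?_
    simp only [fderiv_comp_add_left]
    rw [fderiv_comp_add_left (f := fun y => fderiv ℝ u y (EuclideanSpace.single i 1))]

/-- Let `n ≥ 2` and `Ω = ℝⁿ \ Ḡ` with `G` a convex domain in `ℝⁿ`.
If `u` is a bounded harmonic function in `Ω` (say `|u| ≤ M` on `Ω`), then for every
`x ∈ Ω`, `|∇u(x)| ≤ (C_n / d_x) · sup_Ω |u| ≤ (C_n / d_x) · M`, where
`C_n = 4 (n-1)^{(n-1)/2} ω_{n-1} / (n^{n/2} ω_n)` and `d_x = dist(x, ∂Ω)`. -/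
theorem gradient_bound_complement_convex
    (n : ℕ) (hn : 2 ≤ n) (G Ω : Set (Eu n))
    (hGo : IsOpen G) (hGc : Convex ℝ G) (hGne : G.Nonempty)
    (hΩ : Ω = (closure G)ᶜ)
    (u : Eu n → ℝ) (hu : IsHarmonicOn u Ω)
    (M : ℝ) (hM : ∀ y ∈ Ω, |u y| ≤ M)
    (x : Eu n) (hx : x ∈ Ω) :
    ‖gradient u x‖ ≤ Cconst n / Metric.infDist x (frontier Ω) * M := by
  obtain ⟨m, rfl⟩ : ∃ m, n = m + 1 := ⟨n - 1, by omega⟩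
  have hm : 1 ≤ m := by omega
  have hM0 : 0 ≤ M := (abs_nonneg _).trans (hM x hx)
  have hs : 0 < sphereArea (m + 1) := sphereArea_pos (by omega)
  have hsm : 0 < sphereArea m := sphereArea_pos hm
  have hC : 0 ≤ Cconst (m + 1) := by rw [Cconst_succ]; positivity
  have hΩo : IsOpen Ω := by rw [hΩ]; exact isClosed_closure.isOpen_compl
  have hxG : x ∉ closure G := by rw [hΩ] at hx; exact hx
  have hcc : Convex ℝ (closure G) := hGc.closure
  obtain ⟨p, hp, hpmin⟩ := exists_norm_eq_iInf_of_complete_convex hGne.closure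
    isClosed_closure.isComplete hcc x
  have hang := (norm_eq_iInf_iff_real_inner_le_zero hcc hp).1 hpmin
  have hxp : x - p ≠ 0 := by
    intro h
    rw [sub_eq_zero] at h
    exact hxG (h ▸ hp)
  set D := ‖x - p‖ with hD
  have hD0 : 0 < D := norm_pos_iff.2 hxp
  set e : Eu (m + 1) := D⁻¹ • (x - p) with hedef
  have he : ‖e‖ = 1 := by
    rw [hedef, norm_smul, norm_inv, norm_norm, ← hD]; field_simp
  have hDe : D • e = x - p := by rw [hedef, smul_smul, mul_inv_cancel₀ hD0.ne', one_smul]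
  have hxe : x = p + D • e := by rw [hDe]; abel
  have hee : (⟪e, e⟫ : ℝ) = 1 := by rw [real_inner_self_eq_norm_sq, he]; norm_num
  have hang' : ∀ w ∈ closure G, (⟪w - p, e⟫ : ℝ) ≤ 0 := by
    intro w hw
    rw [hedef, inner_smul_right, real_inner_comm]
    exact mul_nonpos_of_nonneg_of_nonpos (by positivity) (hang w hw)
  have hhalf : ∀ X, 0 < (⟪X - p, e⟫ : ℝ) → X ∈ Ω := by
    intro X hX
    rw [hΩ]
    intro hX'
    exact absurd (hang' X hX') (not_le.2 hX)
  have key : ∀ d, 0 < d → d < D → ‖fderiv ℝ u x‖ ≤ Cconst (m + 1) / d * M := by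
    intro d hd hdD
    have := halfspace_fderiv_at hm e (p + (D - d) • e) he u Ω (fun X hX => hhalf X ?_) M hM hΩo hu d hd
    · have hx' : p + (D - d) • e + d • e = x := by rw [hxe]; module
      rwa [hx'] at this
    · have e1 : X - p = (X - (p + (D - d) • e)) + (D - d) • e := by abel
      rw [e1, inner_add_left, inner_smul_left, hee]
      simp only [conj_trivial]
      linarith
  have key2 : ‖fderiv ℝ u x‖ ≤ Cconst (m + 1) / D * M := by
    have ht : Tendsto (fun d : ℝ => Cconst (m + 1) / d * M) (nhdsWithin D (Set.Iio D))
        (nhds (Cconst (m + 1) / D * M)) := by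
      refine Tendsto.mono_left ?_ nhdsWithin_le_nhds
      have : ContinuousAt (fun d : ℝ => Cconst (m + 1) / d * M) D :=
        (continuousAt_const.div continuousAt_id hD0.ne').mul continuousAt_const
      exact this
    refine ge_of_tendsto ht ?_
    filter_upwards [Ioo_mem_nhdsLT hD0] with d hd
    exact key d hd.1 hd.2
  have hpf : p ∈ frontier Ω := by
    rw [hΩo.frontier_eq]
    refine ⟨?_, fun h => by rw [hΩ] at h; exact h hp⟩
    have ht : Tendsto (fun s : ℝ => p + s • e) (nhdsWithin 0 (Set.Ioi 0)) (nhds p) := by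
      refine Tendsto.mono_left ?_ nhdsWithin_le_nhds
      have : Continuous fun s : ℝ => p + s • e := by fun_prop
      simpa using this.tendsto 0
    refine mem_closure_of_tendsto ht ?_
    filter_upwards [self_mem_nhdsWithin] with s hs
    apply hhalf
    rw [add_sub_cancel_left, inner_smul_left, hee]
    simpa using hs
  have hdist : infDist x (frontier Ω) ≤ D := by
    have := infDist_le_dist_of_mem (x := x) hpf
    rwa [dist_eq_norm] at this
  have hpos : 0 < infDist x (frontier Ω) := by
    refine (isClosed_frontier.notMem_iff_infDist_pos ⟨p, hpf⟩).1 ?_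
    intro h
    rw [hΩo.frontier_eq] at h
    exact h.2 hx
  have hg : ‖gradient u x‖ = ‖fderiv ℝ u x‖ := by
    unfold gradient
    exact LinearIsometryEquiv.norm_map _ _
  rw [hg]
  refine key2.trans ?_
  gcongr
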